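/- arXiv:2112.00056 — 3 statements merged into one kernel-verified Lean document; each statement's English description precedes it below -/
import Mathlib

section
/- For real p with 0 ≤ p ≤ 2 and arbitrary n×n complex matrices X, Y, define δ_p(X,Y) = sqrt(log det(I + |X - Y|^p)), where |M| = (M*M)^{1/2}. Then δ_p satisfies the triangle inequality: δ_p(X,Y) ≤ δ_p(X,Z) + δ_p(Z,Y) for all X, Y, Z. -/
open Matrix
open scoped ComplexOrder

/-- `|M|^p`: the `p`-th power (real exponent) of the matrix absolute value
`|M| = (MᴴM)^{1/2}`, defined via the functional calculus applied to the
Hermitian positive semidefinite matrix `MᴴM`. -/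
noncomputable def matAbsRpow {n : ℕ} (M : Matrix (Fin n) (Fin n) ℂ) (p : ℝ) :
    Matrix (Fin n) (Fin n) ℂ :=
  (Matrix.posSemidef_conjTranspose_mul_self M).1.cfc (fun t => Real.sqrt t ^ p)

/-- `δ_p(X,Y) = √(log det(I + |X-Y|^p))`. -/
noncomputable def deltaP {n : ℕ} (p : ℝ) (X Y : Matrix (Fin n) (Fin n) ℂ) : ℝ :=
  Real.sqrt (Real.log ((Matrix.det (1 + matAbsRpow (X - Y) p)).re))

/-!
With `g t = √(log (1 + t ^ p))`, the number `δ_p(X, Y)` is the Frobenius norm of `g(|X - Y|)`, and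
`g` is increasing and concave on `[0, ∞)`.

By Thompson's inequality `|A + B| ≤ U|A|Uᴴ + V|B|Vᴴ` for some unitaries `U`, `V`, so by Weyl
monotonicity of eigenvalues what remains is the Bourin–Uchiyama inequality
`‖g(P + Q)‖ ≤ ‖g(P)‖ + ‖g(Q)‖` for positive semidefinite `P`, `Q`. With `T = P + Q` we split
`g(T) = g(T)^{1/2} T^{-1/2} (P + Q) T^{-1/2} g(T)^{1/2}`. The summand of `P` is `Y Yᴴ` for
`Y = g(T)^{1/2} W` and `W = T^{-1/2} P^{1/2}`, so it has the norm of `Yᴴ Y = Wᴴ g(T) W`. As `W` is a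
contraction with `Wᴴ T W ≤ P`, Jensen's inequality and the Courant–Fischer principle bound the
eigenvalues of `Wᴴ g(T) W` by those of `g(P)`. The summand of `Q` is treated in the same way.
-/

section Scalar

open Real

lemma hasDerivAt_sqrt_log_one_add_sq {x : ℝ} (hx : 0 < x) :
    HasDerivAt (fun u ↦ √(log (1 + u ^ 2))) (x / ((1 + x ^ 2) * √(log (1 + x ^ 2)))) x := by
  have log_pos : 0 < log (1 + x ^ 2) := Real.log_pos (by simp [pow_pos hx])
  have one_add_sq : HasDerivAt (fun u : ℝ ↦ 1 + u ^ 2) (2 * x) x := by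
    simpa using (hasDerivAt_pow 2 x).const_add 1
  convert (one_add_sq.log (by positivity)).sqrt log_pos.ne' using 1
  field_simp

-- `(1 + t) log (1 + t) / t` is a secant slope of the convex function `s ↦ s log s` at `s = 1`.
lemma antitoneOn_div_one_add_mul_log :
    AntitoneOn (fun t : ℝ ↦ t / ((1 + t) * log (1 + t))) (Set.Ioi 0) := by
  intro x hx y hy hxy
  rw [Set.mem_Ioi] at hx hy
  have slope_le := convexOn_mul_log.secant_mono (a := 1) (x := 1 + x) (y := 1 + y)
    (Set.mem_Ici.2 zero_le_one) (Set.mem_Ici.2 (by positivity)) (Set.mem_Ici.2 (by positivity))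
    (by linarith) (by linarith) (by linarith)
  simp only [log_one, mul_zero, sub_zero, add_sub_cancel_left] at slope_le
  have log_pos : 0 < log (1 + x) := Real.log_pos (by linarith)
  simpa only [inv_div] using inv_anti₀ (by positivity) slope_le

lemma concaveOn_sqrt_log_one_add_sq :
    ConcaveOn ℝ (Set.Ici 0) (fun u : ℝ ↦ √(log (1 + u ^ 2))) := by
  have deriv_eq {x : ℝ} (hx : 0 < x) : deriv (fun u : ℝ ↦ √(log (1 + u ^ 2))) x =
      √(x ^ 2 / ((1 + x ^ 2) * log (1 + x ^ 2)) * (1 / (1 + x ^ 2))) := by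
    rw [(hasDerivAt_sqrt_log_one_add_sq hx).deriv, div_mul_div_comm, mul_one, mul_right_comm,
      sqrt_div (sq_nonneg x), sqrt_sq hx.le, sqrt_mul (by positivity),
      sqrt_mul_self (by positivity)]
  refine AntitoneOn.concaveOn_of_deriv (convex_Ici 0) ?_ ?_ ?_
  · exact ((Continuous.log (by fun_prop) fun u ↦ by positivity).sqrt).continuousOn
  · rw [interior_Ici]
    exact fun x hx ↦ (hasDerivAt_sqrt_log_one_add_sq hx).differentiableAt.differentiableWithinAt
  · rw [interior_Ici]
    intro x hx y hy hxy
    rw [Set.mem_Ioi] at hx hy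
    have sq_le : x ^ 2 ≤ y ^ 2 := by gcongr
    have log_nonneg : 0 ≤ log (1 + x ^ 2) := Real.log_nonneg (by linarith [sq_nonneg x])
    rw [deriv_eq hx, deriv_eq hy]
    refine sqrt_le_sqrt (mul_le_mul ?_ ?_ (by positivity) (by positivity))
    · exact antitoneOn_div_one_add_mul_log (pow_pos hx 2) (pow_pos hy 2) sq_le
    · gcongr

lemma monotoneOn_sqrt_log_one_add_rpow {p : ℝ} (hp : 0 ≤ p) :
    MonotoneOn (fun t : ℝ ↦ √(log (1 + t ^ p))) (Set.Ici 0) := by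
  intro x hx y _ hxy
  have rpow_nonneg : 0 ≤ x ^ p := Real.rpow_nonneg hx p
  have rpow_le : x ^ p ≤ y ^ p := rpow_le_rpow hx hxy hp
  beta_reduce
  gcongr

lemma concaveOn_sqrt_log_one_add_rpow {p : ℝ} (hp0 : 0 ≤ p) (hp2 : p ≤ 2) :
    ConcaveOn ℝ (Set.Ici 0) (fun t : ℝ ↦ √(log (1 + t ^ p))) := by
  have image_subset : (fun t : ℝ ↦ t ^ (p / 2)) '' Set.Ici 0 ⊆ Set.Ici 0 :=
    Set.image_subset_iff.2 fun t ht ↦ Real.rpow_nonneg ht _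
  have rpow_concave : ConcaveOn ℝ (Set.Ici 0) (fun t : ℝ ↦ t ^ (p / 2)) :=
    concaveOn_rpow (by linarith) (by linarith)
  have image_convex : Convex ℝ ((fun t : ℝ ↦ t ^ (p / 2)) '' Set.Ici 0) :=
    ((convex_Ici 0).isPreconnected.image _
      (continuous_rpow_const (by linarith)).continuousOn).ordConnected.convex
  have mono : MonotoneOn (fun u : ℝ ↦ √(log (1 + u ^ 2))) (Set.Ici 0) := by
    simpa only [rpow_two] using monotoneOn_sqrt_log_one_add_rpow zero_le_two
  refine ((concaveOn_sqrt_log_one_add_sq.subset image_subset image_convex).comp rpow_concave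
    (mono.mono image_subset)).congr fun t ht ↦ ?_
  simp only [Function.comp_apply, ← rpow_mul_natCast ht]
  norm_num

end Scalar

-- `1 - w⋆w = (1 - w⋆w)² + w⋆(1 - ww⋆)w`
lemma star_mul_self_le_one_of_mul_star_self_le_one {R : Type*} [Ring R] [PartialOrder R]
    [StarRing R] [StarOrderedRing R] {w : R} (hw : w * star w ≤ 1) : star w * w ≤ 1 := by
  have := StarOrderedRing.toIsOrderedAddMonoid (R := R)
  have decomposition : 1 - star w * w =
      star (1 - star w * w) * (1 - star w * w) + star w * (1 - w * star w) * w := by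
    simp only [star_sub, star_one, star_mul, star_star]
    noncomm_ring
  rw [← sub_nonneg, decomposition]
  exact add_nonneg (star_mul_self_nonneg _) (star_left_conjugate_nonneg (sub_nonneg.2 hw) w)

section MatrixInequalities

open scoped MatrixOrder

variable {𝕜 m n : Type*} [RCLike 𝕜] [Fintype m] [Fintype n]

section QuadForm

/-- The quadratic form `v ↦ Re ⟨v, A v⟩` of a square matrix `A`. In particular `quadForm 1 v` is the
squared Euclidean norm of `v` (the norm of `n → 𝕜` itself is the supremum norm). -/
def quadForm (A : Matrix n n 𝕜) (v : n → 𝕜) : ℝ :=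
  RCLike.re (star v ⬝ᵥ A *ᵥ v)

lemma quadForm_conjTranspose_mul_self (A : Matrix m n 𝕜) (v : n → 𝕜) :
    quadForm (Aᴴ * A) v = ∑ i, ‖(A *ᵥ v) i‖ ^ 2 := by
  have dot_eq : star v ⬝ᵥ (Aᴴ * A) *ᵥ v = star (A *ᵥ v) ⬝ᵥ A *ᵥ v := by
    rw [star_mulVec, dotProduct_mulVec, dotProduct_mulVec, vecMul_vecMul]
  rw [quadForm, dot_eq]
  simp only [dotProduct, Pi.star_apply, RCLike.star_def, RCLike.conj_mul, map_sum]
  norm_cast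

lemma quadForm_conjTranspose_mul_mul (W : Matrix m n 𝕜) (A : Matrix m m 𝕜) (v : n → 𝕜) :
    quadForm (Wᴴ * A * W) v = quadForm A (W *ᵥ v) := by
  rw [quadForm, quadForm, star_mulVec, dotProduct_mulVec, dotProduct_mulVec, dotProduct_mulVec,
    vecMul_vecMul, vecMul_vecMul, Matrix.mul_assoc]

lemma quadForm_smul (A : Matrix n n 𝕜) (c : ℝ) (v : n → 𝕜) :
    quadForm A (c • v) = c ^ 2 * quadForm A v := by
  simp only [quadForm, star_smul, star_trivial, mulVec_smul, dotProduct_smul, smul_dotProduct,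
    RCLike.smul_re]
  ring

lemma quadForm_mono {A B : Matrix n n 𝕜} (hAB : A ≤ B) (v : n → 𝕜) :
    quadForm A v ≤ quadForm B v := by
  simpa only [quadForm, sub_mulVec, dotProduct_sub, map_sub, sub_nonneg] using
    (Matrix.le_iff.1 hAB).re_dotProduct_nonneg v

lemma quadForm_nonneg {A : Matrix n n 𝕜} (hA : A.PosSemidef) (v : n → 𝕜) : 0 ≤ quadForm A v :=
  hA.re_dotProduct_nonneg v

lemma quadForm_selfAdjointPart (A : Matrix n n 𝕜) (v : n → 𝕜) :
    quadForm (selfAdjointPart ℝ A : Matrix n n 𝕜) v = quadForm A v := by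
  have adjoint : star v ⬝ᵥ Aᴴ *ᵥ v = star (star v ⬝ᵥ A *ᵥ v) := by
    rw [← star_dotProduct_star, star_star, star_mulVec, dotProduct_mulVec]
  simp only [quadForm, selfAdjointPart_apply_coe, star_eq_conjTranspose, smul_mulVec, add_mulVec,
    dotProduct_smul, dotProduct_add, adjoint, RCLike.smul_re, map_add, RCLike.star_def,
    RCLike.conj_re, invOf_eq_inv]
  ring

lemma quadForm_mul_le_sqrt_mul_sqrt (G : Matrix n m 𝕜) (A : Matrix m n 𝕜) (v : n → 𝕜) :
    quadForm (G * A) v ≤ √(quadForm (G * Gᴴ) v) * √(quadForm (Aᴴ * A) v) := by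
  have gram : quadForm (G * Gᴴ) v = ∑ i, ‖(Gᴴ *ᵥ v) i‖ ^ 2 := by
    simpa only [conjTranspose_conjTranspose] using quadForm_conjTranspose_mul_self Gᴴ v
  have dot_eq : star v ⬝ᵥ (G * A) *ᵥ v = star (Gᴴ *ᵥ v) ⬝ᵥ A *ᵥ v := by
    rw [star_mulVec, dotProduct_mulVec, dotProduct_mulVec, vecMul_vecMul,
      conjTranspose_conjTranspose]
  calc quadForm (G * A) v
      ≤ ‖star (Gᴴ *ᵥ v) ⬝ᵥ A *ᵥ v‖ := by rw [quadForm, dot_eq]; exact RCLike.re_le_norm _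
    _ ≤ ∑ i, ‖(Gᴴ *ᵥ v) i‖ * ‖(A *ᵥ v) i‖ :=
        (norm_sum_le _ _).trans_eq (by simp only [norm_mul, Pi.star_apply, norm_star])
    _ ≤ √(quadForm (G * Gᴴ) v) * √(quadForm (Aᴴ * A) v) := by
        rw [gram, quadForm_conjTranspose_mul_self]
        exact Real.sum_mul_le_sqrt_mul_sqrt _ _ _

end QuadForm

section FrobeniusTrace

open scoped Matrix.Norms.Frobenius

lemma frobenius_norm_sq_eq_re_trace (A : Matrix m n 𝕜) : ‖A‖ ^ 2 = RCLike.re (Aᴴ * A).trace := by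
  rw [frobenius_norm_def, ← Real.sqrt_eq_rpow, Real.sq_sqrt (by positivity), Finset.sum_comm]
  simp only [trace, diag_apply, mul_apply, conjTranspose_apply, RCLike.star_def, RCLike.conj_mul,
    map_sum, Real.rpow_two]
  norm_cast

lemma frobenius_norm_mul_conjTranspose_self (A : Matrix m n 𝕜) : ‖A * Aᴴ‖ = ‖Aᴴ * A‖ := by
  rw [← sq_eq_sq₀ (norm_nonneg _) (norm_nonneg _), frobenius_norm_sq_eq_re_trace,
    frobenius_norm_sq_eq_re_trace, (isHermitian_mul_conjTranspose_self A).eq,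
    (isHermitian_conjTranspose_mul_self A).eq, Matrix.mul_assoc A, trace_mul_comm A,
    Matrix.mul_assoc Aᴴ, Matrix.mul_assoc Aᴴ, Matrix.mul_assoc A]

end FrobeniusTrace

variable [DecidableEq n]

section FunctionalCalculus

lemma continuousOn_spectrum (A : Matrix n n 𝕜) (f : ℝ → ℝ) : ContinuousOn f (spectrum ℝ A) :=
  A.finite_real_spectrum.continuousOn f

lemma conjTranspose_cfc (f : ℝ → ℝ) (A : Matrix n n 𝕜) : (cfc f A)ᴴ = cfc f A :=
  (cfc_predicate (p := IsSelfAdjoint) f A).star_eq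

lemma cfc_mul_mul_cfc {A : Matrix n n 𝕜} (hA : A.IsHermitian) (f : ℝ → ℝ) :
    cfc f A * A * cfc f A = cfc (fun x ↦ f x * x * f x) A := by
  have cont := continuousOn_spectrum A
  rw [cfc_mul _ _ A (cont _) (cont _), cfc_mul _ _ A (cont _) (cont _),
    cfc_id' ℝ A hA.isSelfAdjoint]

lemma cfc_eq_mul_diagonal_mul {A : Matrix n n 𝕜} (hA : A.IsHermitian) (f : ℝ → ℝ) :
    cfc f A = (hA.eigenvectorUnitary : Matrix n n 𝕜) *
      diagonal (fun i ↦ (f (hA.eigenvalues i) : 𝕜)) *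
        (hA.eigenvectorUnitary : Matrix n n 𝕜)ᴴ := by
  rw [hA.cfc_eq, IsHermitian.cfc, Unitary.conjStarAlgAut_apply]
  rfl

lemma trace_cfc {A : Matrix n n 𝕜} (hA : A.IsHermitian) (f : ℝ → ℝ) :
    (cfc f A).trace = ∑ i, (f (hA.eigenvalues i) : 𝕜) := by
  rw [cfc_eq_mul_diagonal_mul hA, trace_mul_comm, ← Matrix.mul_assoc, ← star_eq_conjTranspose,
    Unitary.coe_star_mul_self, Matrix.one_mul, trace_diagonal]

lemma det_one_add_cfc {A : Matrix n n 𝕜} (hA : A.IsHermitian) (f : ℝ → ℝ) :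
    (1 + cfc f A).det = ∏ i, (1 + f (hA.eigenvalues i) : 𝕜) := by
  rw [cfc_eq_mul_diagonal_mul hA, Matrix.mul_assoc, det_one_add_mul_comm, Matrix.mul_assoc,
    ← star_eq_conjTranspose, Unitary.coe_star_mul_self, Matrix.mul_one, ← diagonal_one,
    diagonal_add, det_diagonal]

lemma quadForm_cfc {A : Matrix n n 𝕜} (hA : A.IsHermitian) (f : ℝ → ℝ) (v : n → 𝕜) :
    quadForm (cfc f A) v =
      ∑ i, f (hA.eigenvalues i) * ‖((hA.eigenvectorUnitary : Matrix n n 𝕜)ᴴ *ᵥ v) i‖ ^ 2 := by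
  have conj := quadForm_conjTranspose_mul_mul (hA.eigenvectorUnitary : Matrix n n 𝕜)ᴴ
    (diagonal fun i ↦ (f (hA.eigenvalues i) : 𝕜)) v
  rw [conjTranspose_conjTranspose] at conj
  rw [cfc_eq_mul_diagonal_mul hA, conj]
  simp only [quadForm, dotProduct, mulVec_diagonal, Pi.star_apply, RCLike.star_def, map_sum]
  refine Finset.sum_congr rfl fun i _ ↦ ?_
  rw [mul_left_comm, RCLike.conj_mul]
  norm_cast

lemma quadForm_one_eq_sum {A : Matrix n n 𝕜} (hA : A.IsHermitian) (v : n → 𝕜) :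
    quadForm (1 : Matrix n n 𝕜) v =
      ∑ i, ‖((hA.eigenvectorUnitary : Matrix n n 𝕜)ᴴ *ᵥ v) i‖ ^ 2 := by
  have diagonalised := quadForm_cfc hA (fun _ ↦ 1) v
  rw [cfc_const_one ℝ A hA.isSelfAdjoint] at diagonalised
  simpa only [one_mul] using diagonalised

lemma quadForm_eq_sum {A : Matrix n n 𝕜} (hA : A.IsHermitian) (v : n → 𝕜) :
    quadForm A v =
      ∑ i, hA.eigenvalues i * ‖((hA.eigenvectorUnitary : Matrix n n 𝕜)ᴴ *ᵥ v) i‖ ^ 2 := by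
  have diagonalised := quadForm_cfc hA (fun x ↦ x) v
  rwa [cfc_id' ℝ A hA.isSelfAdjoint] at diagonalised

-- Jensen, with the missing mass `1 - ‖v‖²` placed at `0`.
lemma quadForm_cfc_le {A : Matrix n n 𝕜} (hA : A.PosSemidef) {g : ℝ → ℝ} (hg0 : 0 ≤ g 0)
    (hg : ConcaveOn ℝ (Set.Ici 0) g) {v : n → 𝕜} (hv : quadForm (1 : Matrix n n 𝕜) v ≤ 1) :
    quadForm (cfc g A) v ≤ g (quadForm A v) := by
  rw [quadForm_one_eq_sum hA.1] at hv
  rw [quadForm_cfc hA.1, quadForm_eq_sum hA.1]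
  set w := (hA.1.eigenvectorUnitary : Matrix n n 𝕜)ᴴ *ᵥ v
  have jensen := hg.map_add_sum_le (t := Finset.univ) (w := fun i ↦ ‖w i‖ ^ 2)
    (p := hA.1.eigenvalues) (v := 1 - ∑ i, ‖w i‖ ^ 2) (q := 0) (fun i _ ↦ sq_nonneg _)
    (sub_add_cancel _ _) (fun i _ ↦ hA.eigenvalues_nonneg i) (sub_nonneg.2 hv) Set.self_mem_Ici
  simp only [smul_eq_mul, mul_zero, zero_add] at jensen
  simp only [mul_comm _ (‖w _‖ ^ 2)]
  linarith [mul_nonneg (sub_nonneg.2 hv) hg0]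

end FunctionalCalculus

section CourantFischer

lemma eigenvalues_monovary {A B : Matrix n n 𝕜} (hA : A.IsHermitian) (hB : B.IsHermitian) :
    Monovary hA.eigenvalues hB.eigenvalues :=
  (hA.eigenvalues₀_antitone.monovary hB.eigenvalues₀_antitone).comp_right
    (Fintype.equivOfCardEq (Fintype.card_fin _)).symm

lemma exists_quadForm_one_eq_one_forall_ne_mulVec_eq_zero (M : Matrix n n 𝕜) (i : n) :
    ∃ v, quadForm (1 : Matrix n n 𝕜) v = 1 ∧ ∀ j ≠ i, (M *ᵥ v) j = 0 := by
  have singular : (M.updateRow i 0).det = 0 := det_eq_zero_of_row_eq_zero i fun j ↦ by simp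
  obtain ⟨u, hu, hMu⟩ := exists_mulVec_eq_zero_iff.2 singular
  have quadForm_pos : 0 < quadForm (1 : Matrix n n 𝕜) u := PosDef.one.re_dotProduct_pos hu
  refine ⟨(√(quadForm (1 : Matrix n n 𝕜) u))⁻¹ • u, ?_, fun j hj ↦ ?_⟩
  · rw [quadForm_smul, inv_pow, Real.sq_sqrt quadForm_pos.le, inv_mul_cancel₀ quadForm_pos.ne']
  · have hMuj := congrFun hMu j
    rw [mulVec, updateRow_ne hj] at hMuj
    rw [mulVec_smul, Pi.smul_apply, mulVec, hMuj, Pi.zero_apply, smul_zero]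

lemma mul_quadForm_one_le_quadForm {A : Matrix n n 𝕜} (hA : A.IsHermitian) {c : ℝ} {v : n → 𝕜}
    (hv : ∀ j, hA.eigenvalues j < c → ((hA.eigenvectorUnitary : Matrix n n 𝕜)ᴴ *ᵥ v) j = 0) :
    c * quadForm (1 : Matrix n n 𝕜) v ≤ quadForm A v := by
  rw [quadForm_one_eq_sum hA, quadForm_eq_sum hA, Finset.mul_sum]
  refine Finset.sum_le_sum fun j _ ↦ ?_
  rcases lt_or_ge (hA.eigenvalues j) c with hj | hj
  · simp [hv j hj]
  · gcongr

lemma quadForm_le_mul_quadForm_one {A : Matrix n n 𝕜} (hA : A.IsHermitian) {c : ℝ} {v : n → 𝕜}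
    (hv : ∀ j, c < hA.eigenvalues j → ((hA.eigenvectorUnitary : Matrix n n 𝕜)ᴴ *ᵥ v) j = 0) :
    quadForm A v ≤ c * quadForm (1 : Matrix n n 𝕜) v := by
  rw [quadForm_one_eq_sum hA, quadForm_eq_sum hA, Finset.mul_sum]
  refine Finset.sum_le_sum fun j _ ↦ ?_
  rcases lt_or_ge c (hA.eigenvalues j) with hj | hj
  · simp [hv j hj]
  · gcongr

-- The conditions `v ⊥ u_j(A)` if `λ_j(A) < λ_i(A)` and `v ⊥ u_j(B)` if `λ_i(B) < λ_j(B)` never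
-- concern the same index `j`, nor `j = i`, so there are fewer of them than the dimension.
lemma exists_eigenvalues_le_quadForm_and_quadForm_le_eigenvalues {A B : Matrix n n 𝕜}
    (hA : A.IsHermitian) (hB : B.IsHermitian) (i : n) :
    ∃ v, quadForm (1 : Matrix n n 𝕜) v = 1 ∧
      hA.eigenvalues i ≤ quadForm A v ∧ quadForm B v ≤ hB.eigenvalues i := by
  let M : Matrix n n 𝕜 := fun j ↦ if hA.eigenvalues j < hA.eigenvalues i
    then (hA.eigenvectorUnitary : Matrix n n 𝕜)ᴴ j else (hB.eigenvectorUnitary : Matrix n n 𝕜)ᴴ j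
  obtain ⟨v, hv, hMv⟩ := exists_quadForm_one_eq_one_forall_ne_mulVec_eq_zero M i
  refine ⟨v, hv, ?_, ?_⟩
  · rw [← mul_one (hA.eigenvalues i), ← hv]
    refine mul_quadForm_one_le_quadForm hA fun j hj ↦ ?_
    simpa only [mulVec, M, if_pos hj] using hMv j (ne_of_apply_ne _ hj.ne)
  · rw [← mul_one (hB.eigenvalues i), ← hv]
    refine quadForm_le_mul_quadForm_one hB fun j hj ↦ ?_
    have hij : ¬ hA.eigenvalues j < hA.eigenvalues i := (eigenvalues_monovary hA hB hj).not_gt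
    simpa only [mulVec, M, if_neg hij] using hMv j (ne_of_apply_ne _ hj.ne')

lemma eigenvalues_le_eigenvalues {A B : Matrix n n 𝕜} (hA : A.IsHermitian) (hB : B.IsHermitian)
    (hAB : A ≤ B) (i : n) : hA.eigenvalues i ≤ hB.eigenvalues i := by
  obtain ⟨v, -, hAv, hBv⟩ := exists_eigenvalues_le_quadForm_and_quadForm_le_eigenvalues hA hB i
  exact hAv.trans ((quadForm_mono hAB v).trans hBv)

lemma eigenvalues_conj_cfc_le [DecidableEq m] {T : Matrix m m 𝕜} {P : Matrix n n 𝕜}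
    {W : Matrix m n 𝕜} (hT : T.PosSemidef) (hP : P.IsHermitian)
    (hW : Wᴴ * W ≤ 1) (hTP : Wᴴ * T * W ≤ P) {g : ℝ → ℝ} (hg0 : 0 ≤ g 0)
    (hmono : MonotoneOn g (Set.Ici 0)) (hconc : ConcaveOn ℝ (Set.Ici 0) g)
    (hconj : (Wᴴ * cfc g T * W).IsHermitian) (i : n) :
    hconj.eigenvalues i ≤ g (hP.eigenvalues i) := by
  obtain ⟨v, hv, hle, hge⟩ := exists_eigenvalues_le_quadForm_and_quadForm_le_eigenvalues hconj hP i
  have norm_le : quadForm (1 : Matrix m m 𝕜) (W *ᵥ v) ≤ 1 := by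
    rw [← quadForm_conjTranspose_mul_mul, Matrix.mul_one]
    exact (quadForm_mono hW v).trans_eq hv
  have quadForm_le : quadForm T (W *ᵥ v) ≤ hP.eigenvalues i := by
    rw [← quadForm_conjTranspose_mul_mul]
    exact (quadForm_mono hTP v).trans hge
  calc hconj.eigenvalues i
      ≤ quadForm (cfc g T) (W *ᵥ v) := by rwa [← quadForm_conjTranspose_mul_mul]
    _ ≤ g (quadForm T (W *ᵥ v)) := quadForm_cfc_le hT hg0 hconc norm_le
    _ ≤ g (hP.eigenvalues i) :=
        hmono (quadForm_nonneg hT _) ((quadForm_nonneg hT _).trans quadForm_le) quadForm_le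

end CourantFischer

section Thompson

/-- The pseudo-inverse `T^{-1/2}` of the square root of a positive semidefinite matrix `T`. It
vanishes on the kernel of `T`, because `(√0)⁻¹ = 0`. -/
noncomputable def pinvSqrt (T : Matrix n n 𝕜) : Matrix n n 𝕜 :=
  cfc (fun x : ℝ ↦ (√x)⁻¹) T

lemma conjTranspose_pinvSqrt (T : Matrix n n 𝕜) : (pinvSqrt T)ᴴ = pinvSqrt T :=
  conjTranspose_cfc _ T

lemma pinvSqrt_mul_mul_pinvSqrt_le_one {T : Matrix n n 𝕜} (hT : T.IsHermitian) :
    pinvSqrt T * T * pinvSqrt T ≤ 1 := by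
  rw [pinvSqrt, cfc_mul_mul_cfc hT]
  refine cfc_le_one _ _ fun x _ ↦ ?_
  rw [← div_eq_inv_mul, Real.div_sqrt]
  exact mul_inv_le_one

lemma abs_eq_cfc_sqrt (A : Matrix n n 𝕜) : CFC.abs A = cfc Real.sqrt (Aᴴ * A) := by
  rw [CFC.abs, CFC.sqrt_eq_real_sqrt _ (star_mul_self_nonneg A), cfcₙ_eq_cfc, star_eq_conjTranspose]

lemma exists_contraction_mul_eq_abs (A : Matrix n n 𝕜) :
    ∃ G : Matrix n n 𝕜, G * Gᴴ ≤ 1 ∧ G * A = CFC.abs A := by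
  have gram_hermitian := isHermitian_conjTranspose_mul_self A
  have cont := continuousOn_spectrum (Aᴴ * A)
  refine ⟨pinvSqrt (Aᴴ * A) * Aᴴ, ?_, ?_⟩
  · rw [conjTranspose_mul, conjTranspose_conjTranspose, conjTranspose_pinvSqrt]
    simpa only [Matrix.mul_assoc] using pinvSqrt_mul_mul_pinvSqrt_le_one gram_hermitian
  · calc pinvSqrt (Aᴴ * A) * Aᴴ * A
        = cfc (fun x : ℝ ↦ (√x)⁻¹) (Aᴴ * A) * cfc (fun x : ℝ ↦ x) (Aᴴ * A) := by
          rw [cfc_id' ℝ (Aᴴ * A) gram_hermitian.isSelfAdjoint, pinvSqrt, Matrix.mul_assoc]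
      _ = cfc Real.sqrt (Aᴴ * A) := by
          rw [← cfc_mul _ _ _ (cont _) (cont _)]
          congr 1 with x
          rw [← div_eq_inv_mul, Real.div_sqrt]
      _ = CFC.abs A := (abs_eq_cfc_sqrt A).symm

lemma eigenvalues_selfAdjointPart_mul_le {G : Matrix n n 𝕜} (hG : G * Gᴴ ≤ 1) (A : Matrix n n 𝕜)
    (hGA : (selfAdjointPart ℝ (G * A) : Matrix n n 𝕜).IsHermitian) (i : n) :
    hGA.eigenvalues i ≤ √((isHermitian_conjTranspose_mul_self A).eigenvalues i) := by
  have gram_hermitian := isHermitian_conjTranspose_mul_self A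
  obtain ⟨v, hv, hle, hge⟩ :=
    exists_eigenvalues_le_quadForm_and_quadForm_le_eigenvalues hGA gram_hermitian i
  calc hGA.eigenvalues i
      ≤ quadForm (selfAdjointPart ℝ (G * A) : Matrix n n 𝕜) v := hle
    _ = quadForm (G * A) v := quadForm_selfAdjointPart _ v
    _ ≤ √(quadForm (G * Gᴴ) v) * √(quadForm (Aᴴ * A) v) := quadForm_mul_le_sqrt_mul_sqrt G A v
    _ ≤ √1 * √(gram_hermitian.eigenvalues i) := by
        gcongr
        exact (quadForm_mono hG v).trans_eq hv
    _ = √(gram_hermitian.eigenvalues i) := by rw [Real.sqrt_one, one_mul]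

lemma exists_unitary_le_conj_cfc {H A : Matrix n n 𝕜} (hH : H.IsHermitian) (hA : A.IsHermitian)
    {f : ℝ → ℝ} (hle : ∀ i, hH.eigenvalues i ≤ f (hA.eigenvalues i)) :
    ∃ U : unitaryGroup n 𝕜, H ≤ U * cfc f A * (U : Matrix n n 𝕜)ᴴ := by
  have diagonal_le : diagonal (fun i ↦ (hH.eigenvalues i : 𝕜)) ≤
      diagonal (fun i ↦ (f (hA.eigenvalues i) : 𝕜)) := by
    rw [Matrix.le_iff, diagonal_sub, posSemidef_diagonal_iff]
    intro i
    exact_mod_cast sub_nonneg.2 (hle i)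
  have cancel (X : Matrix n n 𝕜) :
      (hA.eigenvectorUnitary : Matrix n n 𝕜)ᴴ * (hA.eigenvectorUnitary * X) = X := by
    rw [← Matrix.mul_assoc, ← star_eq_conjTranspose, Unitary.coe_star_mul_self, Matrix.one_mul]
  refine ⟨hH.eigenvectorUnitary * star hA.eigenvectorUnitary, ?_⟩
  calc H = hH.eigenvectorUnitary * diagonal (fun i ↦ (hH.eigenvalues i : 𝕜)) *
        (hH.eigenvectorUnitary : Matrix n n 𝕜)ᴴ := by
        rw [← cfc_eq_mul_diagonal_mul hH (fun x ↦ x), cfc_id' ℝ H hH.isSelfAdjoint]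
    _ ≤ hH.eigenvectorUnitary * diagonal (fun i ↦ (f (hA.eigenvalues i) : 𝕜)) *
        (hH.eigenvectorUnitary : Matrix n n 𝕜)ᴴ := star_right_conjugate_le_conjugate diagonal_le _
    _ = _ := by
        simp only [cfc_eq_mul_diagonal_mul hA, Submonoid.coe_mul, Unitary.coe_star,
          star_eq_conjTranspose, conjTranspose_mul, conjTranspose_conjTranspose, Matrix.mul_assoc,
          cancel]

theorem exists_unitary_abs_add_le (A B : Matrix n n 𝕜) :
    ∃ U V : unitaryGroup n 𝕜, CFC.abs (A + B) ≤
      U * CFC.abs A * (U : Matrix n n 𝕜)ᴴ + V * CFC.abs B * (V : Matrix n n 𝕜)ᴴ := by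
  obtain ⟨G, hG, hGAB⟩ := exists_contraction_mul_eq_abs (A + B)
  have le_conj_abs (C : Matrix n n 𝕜) : ∃ U : unitaryGroup n 𝕜,
      (selfAdjointPart ℝ (G * C) : Matrix n n 𝕜) ≤ U * CFC.abs C * (U : Matrix n n 𝕜)ᴴ := by
    rw [abs_eq_cfc_sqrt]
    exact exists_unitary_le_conj_cfc (selfAdjointPart ℝ (G * C)).2 _
      (eigenvalues_selfAdjointPart_mul_le hG C _)
  obtain ⟨U, hU⟩ := le_conj_abs A
  obtain ⟨V, hV⟩ := le_conj_abs B
  refine ⟨U, V, ?_⟩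
  have abs_selfAdjoint : IsSelfAdjoint (G * (A + B)) := hGAB ▸ (CFC.abs_nonneg _).isSelfAdjoint
  calc CFC.abs (A + B)
      = selfAdjointPart ℝ (G * A) + selfAdjointPart ℝ (G * B) := by
        rw [← hGAB, ← abs_selfAdjoint.coe_selfAdjointPart_apply ℝ, Matrix.mul_add, map_add,
          AddSubgroup.coe_add]
    _ ≤ _ := add_le_add hU hV

end Thompson

section FrobeniusNorm

open scoped Matrix.Norms.Frobenius

lemma frobenius_norm_sq_cfc {A : Matrix n n 𝕜} (hA : A.IsHermitian) (f : ℝ → ℝ) :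
    ‖cfc f A‖ ^ 2 = ∑ i, f (hA.eigenvalues i) ^ 2 := by
  have cont := continuousOn_spectrum A f
  rw [frobenius_norm_sq_eq_re_trace, conjTranspose_cfc, ← cfc_mul f f A cont cont, trace_cfc hA,
    map_sum]
  simp only [RCLike.ofReal_re, sq]

lemma frobenius_norm_cfc_le_of_eigenvalues {A B : Matrix n n 𝕜} (hA : A.IsHermitian)
    (hB : B.IsHermitian) {f g : ℝ → ℝ}
    (hle : ∀ i, |f (hA.eigenvalues i)| ≤ |g (hB.eigenvalues i)|) : ‖cfc f A‖ ≤ ‖cfc g B‖ := by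
  rw [← sq_le_sq₀ (norm_nonneg _) (norm_nonneg _), frobenius_norm_sq_cfc hA,
    frobenius_norm_sq_cfc hB]
  exact Finset.sum_le_sum fun i _ ↦ sq_le_sq.2 (hle i)

lemma frobenius_norm_cfc_unitary_conj {A : Matrix n n 𝕜} (hA : A.IsHermitian)
    (U : unitaryGroup n 𝕜) (g : ℝ → ℝ) :
    ‖cfc g (U * A * (U : Matrix n n 𝕜)ᴴ)‖ = ‖cfc g A‖ := by
  have conj_hermitian : (U * A * (U : Matrix n n 𝕜)ᴴ).IsHermitian :=
    isHermitian_mul_mul_conjTranspose _ hA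
  have eigenvalues_eq : conj_hermitian.eigenvalues = hA.eigenvalues := by
    rw [conj_hermitian.eigenvalues_eq_eigenvalues_iff, charpoly_mul_comm, ← Matrix.mul_assoc,
      ← star_eq_conjTranspose, Unitary.coe_star_mul_self, Matrix.one_mul]
  rw [← sq_eq_sq₀ (norm_nonneg _) (norm_nonneg _), frobenius_norm_sq_cfc conj_hermitian,
    frobenius_norm_sq_cfc hA, eigenvalues_eq]

lemma frobenius_norm_cfc_le_of_le {A B : Matrix n n 𝕜} (hA : A.PosSemidef) (hAB : A ≤ B)
    {g : ℝ → ℝ} (hg0 : 0 ≤ g 0) (hg : MonotoneOn g (Set.Ici 0)) : ‖cfc g A‖ ≤ ‖cfc g B‖ := by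
  have hB : B.PosSemidef := nonneg_iff_posSemidef.1 (hA.nonneg.trans hAB)
  refine frobenius_norm_cfc_le_of_eigenvalues hA.1 hB.1 fun i ↦ ?_
  have eigenvalue_nonneg := hA.eigenvalues_nonneg i
  exact abs_le_abs_of_nonneg (hg0.trans (hg Set.self_mem_Ici eigenvalue_nonneg eigenvalue_nonneg))
    (hg eigenvalue_nonneg (hB.eigenvalues_nonneg i) (eigenvalues_le_eigenvalues hA.1 hB.1 hAB i))

end FrobeniusNorm

section Subadditivity

open scoped Matrix.Norms.Frobenius

variable {g : ℝ → ℝ}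

lemma exists_mul_conjTranspose_eq_pinvSqrt_mul_mul {P T : Matrix n n 𝕜} (hP : P.PosSemidef)
    (hPT : P ≤ T) : ∃ W : Matrix n n 𝕜,
      W * Wᴴ = pinvSqrt T * P * pinvSqrt T ∧ Wᴴ * W ≤ 1 ∧ Wᴴ * T * W ≤ P := by
  have hT : T.PosSemidef := nonneg_iff_posSemidef.1 (hP.nonneg.trans hPT)
  have pinvSqrt_conj_le := pinvSqrt_mul_mul_pinvSqrt_le_one hT.1
  have sqrt_mul_sqrt : CFC.sqrt P * CFC.sqrt P = P := CFC.sqrt_mul_sqrt_self P hP.nonneg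
  have sqrt_hermitian : (CFC.sqrt P)ᴴ = CFC.sqrt P := (CFC.sqrt_nonneg P).isSelfAdjoint.star_eq
  have pinvSqrt_hermitian := conjTranspose_pinvSqrt T
  have mul_conjTranspose : pinvSqrt T * CFC.sqrt P * (pinvSqrt T * CFC.sqrt P)ᴴ =
      pinvSqrt T * P * pinvSqrt T := by
    rw [conjTranspose_mul, sqrt_hermitian, pinvSqrt_hermitian, Matrix.mul_assoc,
      ← Matrix.mul_assoc (CFC.sqrt P), sqrt_mul_sqrt, Matrix.mul_assoc]
  refine ⟨pinvSqrt T * CFC.sqrt P, mul_conjTranspose, ?_, ?_⟩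
  · refine star_mul_self_le_one_of_mul_star_self_le_one (mul_conjTranspose.trans_le ?_)
    have conj_le := star_left_conjugate_le_conjugate hPT (pinvSqrt T)
    rw [star_eq_conjTranspose, pinvSqrt_hermitian] at conj_le
    exact conj_le.trans pinvSqrt_conj_le
  · have conj_le := star_left_conjugate_le_conjugate pinvSqrt_conj_le (CFC.sqrt P)
    rw [star_eq_conjTranspose, sqrt_hermitian, Matrix.mul_one, sqrt_mul_sqrt] at conj_le
    simpa only [conjTranspose_mul, sqrt_hermitian, pinvSqrt_hermitian, Matrix.mul_assoc]
      using conj_le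

lemma frobenius_norm_conj_pinvSqrt_le {P T : Matrix n n 𝕜} (hP : P.PosSemidef) (hPT : P ≤ T)
    (hg0 : 0 ≤ g 0) (hmono : MonotoneOn g (Set.Ici 0)) (hconc : ConcaveOn ℝ (Set.Ici 0) g) :
    ‖cfc (fun x ↦ √(g x)) T * (pinvSqrt T * P * pinvSqrt T) * cfc (fun x ↦ √(g x)) T‖ ≤
      ‖cfc g P‖ := by
  have hT : T.PosSemidef := nonneg_iff_posSemidef.1 (hP.nonneg.trans hPT)
  have g_nonneg {x : ℝ} (hx : 0 ≤ x) : 0 ≤ g x := hg0.trans (hmono Set.self_mem_Ici hx hx)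
  obtain ⟨W, mul_conjTranspose, contraction, conj_le⟩ :=
    exists_mul_conjTranspose_eq_pinvSqrt_mul_mul hP hPT
  set K := cfc (fun x ↦ √(g x)) T
  have K_hermitian : Kᴴ = K := conjTranspose_cfc _ T
  have K_mul_K : K * K = cfc g T := by
    have cont := continuousOn_spectrum T
    rw [← cfc_mul _ _ T (cont _) (cont _)]
    exact cfc_congr fun x hx ↦
      Real.mul_self_sqrt (g_nonneg (spectrum_nonneg_of_nonneg hT.nonneg hx))
  have gram_eq : (K * W)ᴴ * (K * W) = Wᴴ * cfc g T * W := by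
    rw [← K_mul_K, conjTranspose_mul, K_hermitian]
    simp only [Matrix.mul_assoc]
  have gram_posSemidef : (Wᴴ * cfc g T * W).PosSemidef :=
    gram_eq ▸ posSemidef_conjTranspose_mul_self (K * W)
  calc ‖K * (pinvSqrt T * P * pinvSqrt T) * K‖
      = ‖(K * W) * (K * W)ᴴ‖ := by
        rw [← mul_conjTranspose, conjTranspose_mul, K_hermitian]
        simp only [Matrix.mul_assoc]
    _ = ‖cfc (fun x : ℝ ↦ x) (Wᴴ * cfc g T * W)‖ := by
        rw [frobenius_norm_mul_conjTranspose_self, gram_eq,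
          cfc_id' ℝ _ gram_posSemidef.1.isSelfAdjoint]
    _ ≤ ‖cfc g P‖ := frobenius_norm_cfc_le_of_eigenvalues gram_posSemidef.1 hP.1 fun i ↦
        abs_le_abs_of_nonneg (gram_posSemidef.eigenvalues_nonneg i)
          (eigenvalues_conj_cfc_le hT hP.1 contraction conj_le hg0 hmono hconc _ i)

theorem frobenius_norm_cfc_add_le {P Q : Matrix n n 𝕜} (hP : P.PosSemidef) (hQ : Q.PosSemidef)
    (hg0 : g 0 = 0) (hmono : MonotoneOn g (Set.Ici 0)) (hconc : ConcaveOn ℝ (Set.Ici 0) g) :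
    ‖cfc g (P + Q)‖ ≤ ‖cfc g P‖ + ‖cfc g Q‖ := by
  have hT := hP.add hQ
  have g_nonneg {x : ℝ} (hx : 0 ≤ x) : 0 ≤ g x := hg0.ge.trans (hmono Set.self_mem_Ici hx hx)
  set K := cfc (fun x ↦ √(g x)) (P + Q)
  set N := pinvSqrt (P + Q)
  have cont := continuousOn_spectrum (P + Q)
  have conj_eq : K * (N * (P + Q) * N) * K = cfc g (P + Q) := by
    simp only [K, N, pinvSqrt]
    rw [cfc_mul_mul_cfc hT.1, ← cfc_mul _ _ _ (cont _) (cont _), ← cfc_mul _ _ _ (cont _) (cont _)]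
    refine cfc_congr fun x hx ↦ ?_
    have x_nonneg : 0 ≤ x := spectrum_nonneg_of_nonneg hT.nonneg hx
    rcases x_nonneg.eq_or_lt with rfl | x_pos
    · simp [hg0]
    · have sqrt_mul_sqrt := Real.mul_self_sqrt (g_nonneg x_nonneg)
      have inv_mul_self : (√x)⁻¹ * x * (√x)⁻¹ = 1 := by
        rw [← div_eq_inv_mul, Real.div_sqrt, mul_inv_cancel₀ (Real.sqrt_pos.2 x_pos).ne']
      rw [inv_mul_self, mul_one, sqrt_mul_sqrt]
  calc ‖cfc g (P + Q)‖
      = ‖K * (N * P * N) * K + K * (N * Q * N) * K‖ := by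
        rw [← conj_eq]
        simp only [Matrix.mul_add, Matrix.add_mul]
    _ ≤ ‖K * (N * P * N) * K‖ + ‖K * (N * Q * N) * K‖ := norm_add_le _ _
    _ ≤ ‖cfc g P‖ + ‖cfc g Q‖ := add_le_add
        (frobenius_norm_conj_pinvSqrt_le hP (le_add_of_nonneg_right hQ.nonneg) hg0.ge hmono hconc)
        (frobenius_norm_conj_pinvSqrt_le hQ (le_add_of_nonneg_left hP.nonneg) hg0.ge hmono hconc)

theorem frobenius_norm_cfc_abs_add_le (A B : Matrix n n 𝕜) (hg0 : g 0 = 0)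
    (hmono : MonotoneOn g (Set.Ici 0)) (hconc : ConcaveOn ℝ (Set.Ici 0) g) :
    ‖cfc g (CFC.abs (A + B))‖ ≤ ‖cfc g (CFC.abs A)‖ + ‖cfc g (CFC.abs B)‖ := by
  have abs_posSemidef (C : Matrix n n 𝕜) : (CFC.abs C).PosSemidef :=
    nonneg_iff_posSemidef.1 (CFC.abs_nonneg C)
  obtain ⟨U, V, abs_add_le⟩ := exists_unitary_abs_add_le A B
  calc ‖cfc g (CFC.abs (A + B))‖
      ≤ ‖cfc g (U * CFC.abs A * (U : Matrix n n 𝕜)ᴴ + V * CFC.abs B * (V : Matrix n n 𝕜)ᴴ)‖ :=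
        frobenius_norm_cfc_le_of_le (abs_posSemidef _) abs_add_le hg0.ge hmono
    _ ≤ ‖cfc g (U * CFC.abs A * (U : Matrix n n 𝕜)ᴴ)‖ +
        ‖cfc g (V * CFC.abs B * (V : Matrix n n 𝕜)ᴴ)‖ :=
        frobenius_norm_cfc_add_le ((abs_posSemidef A).mul_mul_conjTranspose_same _)
          ((abs_posSemidef B).mul_mul_conjTranspose_same _) hg0 hmono hconc
    _ = ‖cfc g (CFC.abs A)‖ + ‖cfc g (CFC.abs B)‖ := by
        rw [frobenius_norm_cfc_unitary_conj (abs_posSemidef A).1,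
          frobenius_norm_cfc_unitary_conj (abs_posSemidef B).1]

end Subadditivity

end MatrixInequalities

section LogDeterminant

open scoped MatrixOrder Matrix.Norms.Frobenius

variable {n : ℕ}

lemma matAbsRpow_eq_cfc (M : Matrix (Fin n) (Fin n) ℂ) (p : ℝ) :
    matAbsRpow M p = cfc (fun t ↦ √t ^ p) (Mᴴ * M) :=
  ((posSemidef_conjTranspose_mul_self M).1.cfc_eq _).symm

lemma matAbsRpow_zero (M : Matrix (Fin n) (Fin n) ℂ) : matAbsRpow M 0 = 1 := by
  simp only [matAbsRpow_eq_cfc, Real.rpow_zero]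
  exact cfc_const_one ℝ (Mᴴ * M) (isHermitian_conjTranspose_mul_self M).isSelfAdjoint

lemma deltaP_eq_frobenius_norm (p : ℝ) (X Y : Matrix (Fin n) (Fin n) ℂ) :
    deltaP p X Y = ‖cfc (fun t : ℝ ↦ √(Real.log (1 + t ^ p))) (CFC.abs (X - Y))‖ := by
  set M := X - Y with hM
  have gram_hermitian : (Mᴴ * M).IsHermitian := isHermitian_conjTranspose_mul_self M
  have one_le (i : Fin n) : 1 ≤ 1 + √(gram_hermitian.eigenvalues i) ^ p :=
    le_add_of_nonneg_right (Real.rpow_nonneg (Real.sqrt_nonneg _) p)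
  have norm_sq : ‖cfc (fun t : ℝ ↦ √(Real.log (1 + t ^ p))) (CFC.abs M)‖ ^ 2 =
      ∑ i, Real.log (1 + √(gram_hermitian.eigenvalues i) ^ p) := by
    rw [abs_eq_cfc_sqrt, ← cfc_comp _ _ _ gram_hermitian.isSelfAdjoint
      (((Mᴴ * M).finite_real_spectrum.image _).continuousOn _)
      (continuousOn_spectrum _ _), frobenius_norm_sq_cfc gram_hermitian]
    exact Finset.sum_congr rfl fun i _ ↦ Real.sq_sqrt (Real.log_nonneg (one_le i))
  have det_eq : (1 + matAbsRpow M p).det.re =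
      ∏ i, (1 + √(gram_hermitian.eigenvalues i) ^ p) := by
    rw [matAbsRpow_eq_cfc, det_one_add_cfc gram_hermitian]
    simp only [Complex.coe_algebraMap, ← Complex.ofReal_one, ← Complex.ofReal_add,
      ← Complex.ofReal_prod, Complex.ofReal_re]
  rw [deltaP, ← hM, det_eq, Real.log_prod fun i _ ↦ (zero_lt_one.trans_le (one_le i)).ne',
    ← norm_sq, Real.sqrt_sq (norm_nonneg _)]

end LogDeterminant

/-- Triangle inequality for `δ_p`, `0 ≤ p ≤ 2`. -/
theorem deltaP_triangle {n : ℕ} (p : ℝ) (hp0 : 0 ≤ p) (hp2 : p ≤ 2)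
    (X Y Z : Matrix (Fin n) (Fin n) ℂ) :
    deltaP p X Y ≤ deltaP p X Z + deltaP p Z Y := by
  rcases hp0.eq_or_lt with rfl | hp_pos
  · have deltaP_zero_const : deltaP 0 X Y = deltaP 0 X Z := by
      simp only [deltaP, matAbsRpow_zero]
    rw [deltaP_zero_const]
    exact le_add_of_nonneg_right (Real.sqrt_nonneg _)
  · rw [deltaP_eq_frobenius_norm, deltaP_eq_frobenius_norm, deltaP_eq_frobenius_norm,
      ← sub_add_sub_cancel X Z Y]
    refine frobenius_norm_cfc_abs_add_le (X - Z) (Z - Y) ?_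
      (monotoneOn_sqrt_log_one_add_rpow hp0) (concaveOn_sqrt_log_one_add_rpow hp0 hp2)
    simp [Real.zero_rpow hp_pos.ne']
end

section
/- Let f : ℝ_+ → ℝ_+ be concave with f(0) = 0, and let A, B be n×n complex matrices. Then the singular values satisfy the weak majorization { f(σ_j(A+B)) }_j ≺_w { f(σ_j(A)) + f(σ_j(B)) }_j. -/
open Matrix Finset
open scoped ComplexOrder

/-- `x` is weakly majorized by `y` (`x ≺_w y`). -/
def IsWeaklyMajorizedBy {n : ℕ} (x y : Fin n → ℝ) : Prop :=
  ∀ s : Finset (Fin n), ∃ t : Finset (Fin n), t.card = s.card ∧ ∑ i ∈ s, x i ≤ ∑ i ∈ t, y i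

/-- Singular values of a complex matrix: the square roots of the eigenvalues of `MᴴM`. -/
noncomputable def singVals {n : ℕ} (M : Matrix (Fin n) (Fin n) ℂ) : Fin n → ℝ :=
  fun j => Real.sqrt ((Matrix.posSemidef_conjTranspose_mul_self M).1.eigenvalues j)

/-!
The `k` largest singular values of `T + S` do not decrease when `T + S` is restricted to the span
`V` of its first `k` right singular vectors, while those of `T` and `S` do not increase under
restriction. As `f` is increasing, it therefore suffices to prove the inequality of full sums
`∑ f(σᵢ(T + S)) ≤ ∑ f(σᵢ(T)) + ∑ f(σᵢ(S))` on `V`.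

On finitely many points, `f` is a constant `f 0 ≥ 0` plus a nonnegative combination of the functions
`t ↦ min t c`, which reduces the question to these functions. The sum `∑ min (σᵢ(T)) c` is the
minimum over `R` of `c * rank R` plus the nuclear norm of `T - R`: it is attained by letting `R`
agree with `T` on the singular vectors with `σᵢ > c`, and bounded below by Weyl's inequality. Both
rank and nuclear norm are subadditive, hence so is the minimum.
-/

open Module
open scoped InnerProductSpace

section FiniteDimensional

variable {K V W : Type*} [DivisionRing K] [AddCommGroup V] [Module K V] [AddCommGroup W]
  [Module K W] [FiniteDimensional K V]

lemma exists_ne_zero_mem_of_finrank_lt_add {M N : Submodule K V}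
    (h : finrank K V < finrank K M + finrank K N) : ∃ v ∈ M, v ∈ N ∧ v ≠ 0 := by
  have hMN : M ⊓ N ≠ ⊥ := fun hbot =>
    h.not_ge (Submodule.finrank_add_finrank_le_of_disjoint (disjoint_iff.2 hbot))
  obtain ⟨v, ⟨hvM, hvN⟩, hv⟩ := Submodule.exists_mem_ne_zero_of_ne_bot hMN
  exact ⟨v, hvM, hvN, hv⟩

lemma finrank_add_finrank_le_finrank_comap_add_finrank [FiniteDimensional K W] (T : V →ₗ[K] W)
    (N : Submodule K W) :
    finrank K V + finrank K N ≤ finrank K (N.comap T) + finrank K W := by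
  have hrank := (N.mkQ ∘ₗ T).finrank_range_add_finrank_ker
  rw [LinearMap.ker_comp, Submodule.ker_mkQ] at hrank
  have hrange := (N.mkQ ∘ₗ T).range.finrank_le
  have hquot := N.finrank_quotient_add_finrank
  omega

lemma finrank_range_add_le (T S : V →ₗ[K] W) :
    finrank K (T + S).range ≤ finrank K T.range + finrank K S.range := by
  refine (Submodule.finrank_mono ?_).trans (Submodule.finrank_add_le_finrank_add_finrank _ _)
  rintro _ ⟨v, rfl⟩
  exact Submodule.add_mem_sup (T.mem_range_self v) (S.mem_range_self v)

end FiniteDimensional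

section Concave

variable {K : Type*} [Field K] [LinearOrder K] [IsStrictOrderedRing K]

lemma monotoneOn_Ici_of_concaveOn_of_forall_le {f : K → K} {a b : K}
    (hf : ConcaveOn K (Set.Ici a) f) (hb : ∀ t, a ≤ t → b ≤ f t) : MonotoneOn f (Set.Ici a) := by
  intro x hx y hy hxy
  by_contra! hlt
  have hxy : x < y := hxy.lt_of_ne (by rintro rfl; exact hlt.false)
  set d := (f x - f y) / (y - x)
  have hd : 0 < d := div_pos (sub_pos.2 hlt) (sub_pos.2 hxy)
  have hyb := hb y hy
  set z := y + (f y - b + 1) / d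
  have hyz : y < z := lt_add_of_pos_right y (div_pos (by linarith) hd)
  have hslope : (f z - f y) / (z - y) ≤ -d := by
    refine (hf.slope_anti_adjacent hx (hy.trans hyz.le) hxy hyz).trans_eq ?_
    rw [← neg_div, neg_sub]
  have hfz : f z - f y ≤ -(f y - b + 1) := by
    rw [div_le_iff₀ (sub_pos.2 hyz)] at hslope
    simpa [z, hd.ne', mul_div_cancel₀] using hslope
  linarith [hb z (hy.trans hyz.le)]

lemma monotoneOn_inter_Iic_of_concaveOn {f : K → K} {s : Set K} (hf : ConcaveOn K s f) {a b : K}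
    (hb : b ∈ s) (hab : a < b) (hfab : f a ≤ f b) :
    MonotoneOn f (s ∩ Set.Iic a) := by
  intro x ⟨hxs, _⟩ y ⟨hys, hya⟩ hxy
  have hfya : f y ≤ f a := hf.left_le_of_le_right'' hys hb hya hab hfab
  exact hf.left_le_of_le_right'' hxs hb hxy (hya.trans_lt hab) (hfya.trans hfab)

lemma exists_monotoneOn_sub_mul {f : K → K} {s : Set K} (hf : ConcaveOn K s f) {a b : K}
    (hb : b ∈ s) (hab : a < b) (hfab : f a ≤ f b) :
    ∃ m, 0 ≤ m ∧ f a - m * a = f b - m * b ∧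
      MonotoneOn (fun t => f t - m * t) (s ∩ Set.Iic a) := by
  set m := (f b - f a) / (b - a)
  have hm : 0 ≤ m := div_nonneg (sub_nonneg.2 hfab) (sub_pos.2 hab).le
  have hsecant : m * (b - a) = f b - f a := div_mul_cancel₀ _ (sub_pos.2 hab).ne'
  have hends : f a - m * a = f b - m * b := by linarith
  exact ⟨m, hm, hends, monotoneOn_inter_Iic_of_concaveOn
    (hf.sub ((convexOn_id hf.1).smul hm)) hb hab hends.le⟩

lemma exists_eq_add_sum_mul_min {f : K → K} (hf : ConcaveOn K (Set.Ici 0) f) {s : Finset K}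
    (hs : ∀ t ∈ s, 0 < t) (hmono : MonotoneOn f (insert 0 s : Finset K)) :
    ∃ w : K → K, (∀ c ∈ s, 0 ≤ w c) ∧
      ∀ t ∈ insert 0 s, f t = f 0 + ∑ c ∈ s, w c * min t c := by
  induction s using Finset.induction_on_max generalizing f with
  | empty => exact ⟨0, by simp, by simp⟩
  | insert b s hlt ih =>
    obtain ⟨hb, hs_pos⟩ := (forall_mem_insert _ _ _).1 hs
    have hlt' : ∀ t ∈ insert 0 s, t < b := (forall_mem_insert _ _ _).2 ⟨hb, hlt⟩
    have hnonneg : ∀ t ∈ insert 0 s, 0 ≤ t :=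
      (forall_mem_insert _ _ _).2 ⟨le_rfl, fun t ht => (hs_pos t ht).le⟩
    obtain ⟨a, ha, hmax : ∀ t ∈ insert 0 s, t ≤ a⟩ :=
      (insert 0 s).exists_max_image id (insert_nonempty 0 s)
    rw [insert_comm] at hmono ⊢
    obtain ⟨m, hm, hends, hsub_mono⟩ := exists_monotoneOn_sub_mul hf hb.le (hlt' a ha)
      (hmono (mem_insert_of_mem ha) (mem_insert_self b _) (hlt' a ha).le)
    obtain ⟨w, hw, hsub⟩ := ih (hf.sub ((convexOn_id (convex_Ici 0)).smul hm)) hs_pos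
      (hsub_mono.mono fun t ht => ⟨hnonneg t ht, hmax t ht⟩)
    replace hsub : ∀ t ∈ insert 0 s, f t - m * t = f 0 + ∑ c ∈ s, w c * min t c := by
      simpa using hsub
    have hbs : b ∉ s := fun hmem => (hlt b hmem).false
    refine ⟨Function.update w b m, ?_, ?_⟩
    · refine (forall_mem_insert _ _ _).2 ⟨by simpa using hm, fun c hc => ?_⟩
      simpa [ne_of_mem_of_not_mem hc hbs] using hw c hc
    have hsum (t : K) : ∑ c ∈ insert b s, Function.update w b m c * min t c =
        m * min t b + ∑ c ∈ s, w c * min t c := by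
      rw [sum_insert hbs, Function.update_self]
      congr 1
      refine sum_congr rfl fun c hc => ?_
      rw [Function.update_of_ne (ne_of_mem_of_not_mem hc hbs)]
    refine (forall_mem_insert _ _ _).2 ⟨?_, fun t ht => ?_⟩
    · have hsum_ab : ∑ c ∈ s, w c * min b c = ∑ c ∈ s, w c * min a c := by
        refine sum_congr rfl fun c hc => ?_
        rw [min_eq_right (hlt c hc).le, min_eq_right (hmax c (mem_insert_of_mem hc))]
      rw [hsum, min_self, hsum_ab]
      linarith [hsub a ha]
    · rw [hsum, min_eq_left (hlt' t ht).le]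
      linarith [hsub t ht]

lemma sum_comp_le_sum_comp_of_sum_min_le {ι κ : Type*} [Fintype ι] [Fintype κ]
    (hcard : Fintype.card ι ≤ Fintype.card κ) {x : ι → K} {y : κ → K}
    (hx : ∀ i, 0 ≤ x i) (hy : ∀ j, 0 ≤ y j)
    (hxy : ∀ c, 0 ≤ c → ∑ i, min (x i) c ≤ ∑ j, min (y j) c)
    {f : K → K} (hf : ConcaveOn K (Set.Ici 0) f) (hmono : MonotoneOn f (Set.Ici 0))
    (hf0 : 0 ≤ f 0) : ∑ i, f (x i) ≤ ∑ j, f (y j) := by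
  set s : Finset K := (univ.image x ∪ univ.image y).erase 0
  have hnonneg : ∀ t ∈ insert 0 s, 0 ≤ t := by
    simp only [s, mem_insert, mem_erase, mem_union, mem_image, mem_univ, true_and]
    rintro t (rfl | ⟨-, ⟨i, rfl⟩ | ⟨j, rfl⟩⟩)
    exacts [le_rfl, hx i, hy j]
  have hs : ∀ t ∈ s, 0 < t := fun t ht =>
    (hnonneg t (mem_insert_of_mem ht)).lt_of_ne' (ne_of_mem_erase ht)
  obtain ⟨w, hw, hfw⟩ := exists_eq_add_sum_mul_min hf hs (hmono.mono hnonneg)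
  have hxs (i) : x i ∈ insert 0 s := by
    by_cases hi : x i = 0 <;> simp [s, hi]
  have hys (j) : y j ∈ insert 0 s := by
    by_cases hj : y j = 0 <;> simp [s, hj]
  simp only [hfw _ (hxs _), hfw _ (hys _), sum_add_distrib, sum_const, card_univ, nsmul_eq_mul]
  rw [sum_comm, sum_comm (s := (univ : Finset κ))]
  simp only [← mul_sum]
  gcongr with c hc
  exacts [hw c hc, hxy c (hs c hc).le]

end Concave

section SingularVectors

variable {𝕜 : Type*} [RCLike 𝕜]
  {E : Type*} [NormedAddCommGroup E] [InnerProductSpace 𝕜 E]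
  {F : Type*} [NormedAddCommGroup F] [InnerProductSpace 𝕜 F]

lemma norm_sq_apply_eq_sum_of_pairwise_inner_eq_zero {ι : Type*} [Fintype ι]
    (b : OrthonormalBasis ι 𝕜 E) {T : E →ₗ[𝕜] F}
    (hT : Pairwise fun i j => ⟪T (b i), T (b j)⟫_𝕜 = 0) (v : E) :
    ‖T v‖ ^ 2 = ∑ i, ‖T (b i)‖ ^ 2 * ‖⟪b i, v⟫_𝕜‖ ^ 2 := by
  have hTv : T v = ∑ i, ⟪b i, v⟫_𝕜 • T (b i) := by
    conv_lhs => rw [← b.sum_repr' v]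
    simp only [map_sum, map_smul]
  have hdiag (i : ι) : ⟪⟪b i, v⟫_𝕜 • T (b i), T v⟫_𝕜 =
      ((‖T (b i)‖ ^ 2 * ‖⟪b i, v⟫_𝕜‖ ^ 2 : ℝ) : 𝕜) := by
    rw [hTv, inner_sum, sum_eq_single i (fun j _ hji => by
      simp [inner_smul_left, inner_smul_right, hT hji.symm]) (by simp)]
    rw [inner_self_eq_norm_sq_to_K, norm_smul]
    push_cast
    ring
  have hinner : ⟪T v, T v⟫_𝕜 = ((∑ i, ‖T (b i)‖ ^ 2 * ‖⟪b i, v⟫_𝕜‖ ^ 2 : ℝ) : 𝕜) := by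
    conv_lhs => enter [2]; rw [hTv]
    simp only [sum_inner, hdiag, RCLike.ofReal_sum]
  rw [inner_self_eq_norm_sq_to_K] at hinner
  exact_mod_cast hinner

variable [FiniteDimensional 𝕜 E] [FiniteDimensional 𝕜 F] (T : E →ₗ[𝕜] F)

/-- An orthonormal basis of right singular vectors of `T`: the eigenvectors of `T* T`, ordered by
decreasing singular value. -/
noncomputable def rightSingularBasis : OrthonormalBasis (Fin (finrank 𝕜 E)) 𝕜 E :=
  T.isSymmetric_adjoint_comp_self.eigenvectorBasis rfl

lemma inner_apply_rightSingularBasis (i j : Fin (finrank 𝕜 E)) :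
    ⟪T (rightSingularBasis T i), T (rightSingularBasis T j)⟫_𝕜 =
      if i = j then (T.singularValues i : 𝕜) ^ 2 else 0 := by
  have heigen : LinearMap.adjoint T (T (rightSingularBasis T j)) =
      (T.singularValues j : 𝕜) ^ 2 • rightSingularBasis T j := by
    rw [← RCLike.ofReal_pow, T.sq_singularValues_fin rfl]
    exact T.isSymmetric_adjoint_comp_self.apply_eigenvectorBasis rfl j
  rw [← LinearMap.adjoint_inner_right, heigen, inner_smul_right,
    OrthonormalBasis.inner_eq_ite]
  split_ifs with hij <;> simp [hij]

lemma norm_apply_rightSingularBasis (i : Fin (finrank 𝕜 E)) :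
    ‖T (rightSingularBasis T i)‖ = T.singularValues i := by
  have hsq := inner_apply_rightSingularBasis T i i
  rw [if_pos rfl, inner_self_eq_norm_sq_to_K] at hsq
  exact (sq_eq_sq₀ (norm_nonneg _) (T.singularValues_nonneg i)).1 (by exact_mod_cast hsq)

lemma norm_sq_apply_eq_sum_sq_singularValues (v : E) :
    ‖T v‖ ^ 2 =
      ∑ i : Fin (finrank 𝕜 E), T.singularValues i ^ 2 * ‖⟪rightSingularBasis T i, v⟫_𝕜‖ ^ 2 := by
  simp only [← norm_apply_rightSingularBasis]
  refine norm_sq_apply_eq_sum_of_pairwise_inner_eq_zero _ (fun i j hij => ?_) v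
  exact (inner_apply_rightSingularBasis T i j).trans (if_neg hij)

/-- The span of the first `k` right singular vectors of `T`, on which `T` stretches the most; it is
all of `E` once `finrank 𝕜 E ≤ k`. -/
noncomputable def leadingSingularSpace (k : ℕ) : Submodule 𝕜 E :=
  Submodule.span 𝕜 (Set.range fun i : {i : Fin (finrank 𝕜 E) // i.val < k} =>
    rightSingularBasis T i)

lemma finrank_leadingSingularSpace (k : ℕ) :
    finrank 𝕜 (leadingSingularSpace T k) = min k (finrank 𝕜 E) := by
  have hindep : LinearIndependent 𝕜 fun i : {i : Fin (finrank 𝕜 E) // i.val < k} =>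
      rightSingularBasis T i :=
    (rightSingularBasis T).orthonormal.linearIndependent.comp _ Subtype.val_injective
  rw [leadingSingularSpace, finrank_span_eq_card hindep, Fintype.card_subtype,
    Fin.card_filter_val_lt, min_comm]

lemma leadingSingularSpace_mono : Monotone (leadingSingularSpace T) := by
  intro j k hjk
  refine Submodule.span_mono ?_
  rintro _ ⟨⟨i, hi⟩, rfl⟩
  exact ⟨⟨i, hi.trans_le hjk⟩, rfl⟩

lemma finrank_le_finrank_orthogonal_leadingSingularSpace_add (k : ℕ) :
    finrank 𝕜 E ≤ finrank 𝕜 (leadingSingularSpace T k)ᗮ + k := by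
  have hcompl := (leadingSingularSpace T k).finrank_add_finrank_orthogonal
  rw [finrank_leadingSingularSpace] at hcompl
  omega

lemma inner_rightSingularBasis_of_mem_leadingSingularSpace {k : ℕ} {v : E}
    (hv : v ∈ leadingSingularSpace T k) {i : Fin (finrank 𝕜 E)} (hi : k ≤ i) :
    ⟪rightSingularBasis T i, v⟫_𝕜 = 0 := by
  suffices leadingSingularSpace T k ≤ (𝕜 ∙ rightSingularBasis T i)ᗮ from
    Submodule.mem_orthogonal_singleton_iff_inner_right.1 (this hv)
  refine Submodule.span_le.2 ?_
  rintro _ ⟨⟨j, hj⟩, rfl⟩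
  exact Submodule.mem_orthogonal_singleton_iff_inner_right.2
    ((rightSingularBasis T).inner_eq_zero (Fin.ne_of_gt (hj.trans_le hi)))

lemma mul_norm_le_norm_apply_of_mem_leadingSingularSpace {k : ℕ} {v : E}
    (hv : v ∈ leadingSingularSpace T (k + 1)) : T.singularValues k * ‖v‖ ≤ ‖T v‖ := by
  refine (sq_le_sq₀ (mul_nonneg (T.singularValues_nonneg k) (norm_nonneg v)) (norm_nonneg _)).1 ?_
  rw [mul_pow, norm_sq_apply_eq_sum_sq_singularValues,
    ← (rightSingularBasis T).sum_sq_norm_inner_right, mul_sum]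
  refine sum_le_sum fun i _ => ?_
  rcases lt_or_ge k i.val with hki | hik
  · simp [inner_rightSingularBasis_of_mem_leadingSingularSpace T hv hki]
  · gcongr
    exacts [T.singularValues_nonneg k, T.singularValues_antitone hik]

lemma norm_apply_le_mul_norm_of_mem_orthogonal_leadingSingularSpace {k : ℕ} {v : E}
    (hv : v ∈ (leadingSingularSpace T k)ᗮ) : ‖T v‖ ≤ T.singularValues k * ‖v‖ := by
  refine (sq_le_sq₀ (norm_nonneg _) (mul_nonneg (T.singularValues_nonneg k) (norm_nonneg v))).1 ?_
  rw [mul_pow, norm_sq_apply_eq_sum_sq_singularValues,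
    ← (rightSingularBasis T).sum_sq_norm_inner_right, mul_sum]
  refine sum_le_sum fun i _ => ?_
  rcases lt_or_ge i.val k with hik | hki
  · have horth : ⟪rightSingularBasis T i, v⟫_𝕜 = 0 :=
      hv _ (Submodule.subset_span ⟨⟨i, hik⟩, rfl⟩)
    simp [horth]
  · gcongr
    exacts [T.singularValues_nonneg i, T.singularValues_antitone hki]

lemma singularValues_le_of_finrank_le {V : Submodule 𝕜 E} {k : ℕ}
    (hV : finrank 𝕜 E ≤ finrank 𝕜 V + k) {c : ℝ} (hc : 0 ≤ c)
    (h : ∀ v ∈ V, ‖T v‖ ≤ c * ‖v‖) : T.singularValues k ≤ c := by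
  rcases le_or_gt (finrank 𝕜 E) k with hk | hk
  · rwa [T.singularValues_of_finrank_le hk]
  obtain ⟨v, hvV, hvk, hv⟩ : ∃ v ∈ V, v ∈ leadingSingularSpace T (k + 1) ∧ v ≠ 0 := by
    refine exists_ne_zero_mem_of_finrank_lt_add ?_
    rw [finrank_leadingSingularSpace, min_eq_left hk]
    omega
  exact le_of_mul_le_mul_right
    ((mul_norm_le_norm_apply_of_mem_leadingSingularSpace T hvk).trans (h v hvV))
    (norm_pos_iff.2 hv)

lemma le_singularValues_of_lt_finrank {V : Submodule 𝕜 E} {k : ℕ} (hV : k < finrank 𝕜 V)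
    {c : ℝ} (h : ∀ v ∈ V, c * ‖v‖ ≤ ‖T v‖) : c ≤ T.singularValues k := by
  obtain ⟨v, hvV, hvk, hv⟩ : ∃ v ∈ V, v ∈ (leadingSingularSpace T k)ᗮ ∧ v ≠ 0 := by
    refine exists_ne_zero_mem_of_finrank_lt_add ?_
    have horth := finrank_le_finrank_orthogonal_leadingSingularSpace_add T k
    omega
  exact le_of_mul_le_mul_right
    ((h v hvV).trans (norm_apply_le_mul_norm_of_mem_orthogonal_leadingSingularSpace T hvk))
    (norm_pos_iff.2 hv)

lemma singularValues_finrank_range_add_le (T R : E →ₗ[𝕜] F) (j : ℕ) :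
    (T + R).singularValues (finrank 𝕜 R.range + j) ≤ T.singularValues j := by
  refine singularValues_le_of_finrank_le (T + R) (V := R.ker ⊓ (leadingSingularSpace T j)ᗮ) ?_
    (T.singularValues_nonneg j) fun v ⟨hvR, hvT⟩ => ?_
  · have hsup := Submodule.finrank_sup_add_finrank_inf_eq R.ker (leadingSingularSpace T j)ᗮ
    have hsup_le := (R.ker ⊔ (leadingSingularSpace T j)ᗮ).finrank_le
    have hrank := R.finrank_range_add_finrank_ker
    have horth := finrank_le_finrank_orthogonal_leadingSingularSpace_add T j
    omega
  · rw [LinearMap.add_apply, LinearMap.mem_ker.1 hvR, add_zero]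
    exact norm_apply_le_mul_norm_of_mem_orthogonal_leadingSingularSpace T hvT

variable {G : Type*} [NormedAddCommGroup G] [InnerProductSpace 𝕜 G] [FiniteDimensional 𝕜 G]

lemma singularValues_comp_le {K : G →ₗ[𝕜] E} (hK : ∀ v, ‖K v‖ ≤ ‖v‖) (j : ℕ) :
    (T ∘ₗ K).singularValues j ≤ T.singularValues j := by
  refine singularValues_le_of_finrank_le (T ∘ₗ K) (V := (leadingSingularSpace T j)ᗮ.comap K) ?_
    (T.singularValues_nonneg j) fun v hv => ?_
  · have hcomap := finrank_add_finrank_le_finrank_comap_add_finrank K (leadingSingularSpace T j)ᗮ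
    have horth := finrank_le_finrank_orthogonal_leadingSingularSpace_add T j
    omega
  · exact (norm_apply_le_mul_norm_of_mem_orthogonal_leadingSingularSpace T hv).trans
      (mul_le_mul_of_nonneg_left (hK v) (T.singularValues_nonneg j))

lemma singularValues_le_domRestrict_leadingSingularSpace {j k : ℕ} (hjk : j < k) :
    T.singularValues j ≤ (T.domRestrict (leadingSingularSpace T k)).singularValues j := by
  rcases le_or_gt (finrank 𝕜 E) j with hj | hj
  · rw [T.singularValues_of_finrank_le hj]
    exact LinearMap.singularValues_nonneg _ j
  have hle : leadingSingularSpace T (j + 1) ≤ leadingSingularSpace T k :=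
    leadingSingularSpace_mono T hjk
  refine le_singularValues_of_lt_finrank _
    (V := (leadingSingularSpace T (j + 1)).comap (leadingSingularSpace T k).subtype) ?_ fun v hv =>
      mul_norm_le_norm_apply_of_mem_leadingSingularSpace T hv
  rw [(Submodule.comapSubtypeEquivOfLe hle).finrank_eq, finrank_leadingSingularSpace]
  omega

lemma re_trace_adjoint_comp_le_sum_norm {ι : Type*} [Fintype ι] (b : OrthonormalBasis ι 𝕜 E)
    {U : E →ₗ[𝕜] F} (hU : ∀ v, ‖U v‖ ≤ ‖v‖) :
    RCLike.re (LinearMap.trace 𝕜 E (LinearMap.adjoint U ∘ₗ T)) ≤ ∑ i, ‖T (b i)‖ := by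
  rw [LinearMap.trace_eq_sum_inner _ b, map_sum]
  refine sum_le_sum fun i _ => ?_
  calc RCLike.re ⟪b i, LinearMap.adjoint U (T (b i))⟫_𝕜
      = RCLike.re ⟪U (b i), T (b i)⟫_𝕜 := by rw [LinearMap.adjoint_inner_right]
    _ ≤ ‖U (b i)‖ * ‖T (b i)‖ := re_inner_le_norm _ _
    _ ≤ 1 * ‖T (b i)‖ := by
        gcongr
        exact (hU _).trans_eq (b.norm_eq_one i)
    _ = ‖T (b i)‖ := one_mul _

lemma exists_trace_adjoint_comp_eq_sum_singularValues :
    ∃ U : E →ₗ[𝕜] F, (∀ v, ‖U v‖ ≤ ‖v‖) ∧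
      LinearMap.trace 𝕜 E (LinearMap.adjoint U ∘ₗ T) =
        ((∑ i : Fin (finrank 𝕜 E), T.singularValues i : ℝ) : 𝕜) := by
  set x := rightSingularBasis T
  -- With `0⁻¹ = 0`, this is the partial isometry in the polar decomposition of `T`.
  set U : E →ₗ[𝕜] F := x.toBasis.constr 𝕜 fun i => (T.singularValues i : 𝕜)⁻¹ • T (x i)
  have hU (i) : U (x i) = (T.singularValues i : 𝕜)⁻¹ • T (x i) := by
    simp only [U, ← x.coe_toBasis, Basis.constr_basis]
  have hUorth : Pairwise fun i j => ⟪U (x i), U (x j)⟫_𝕜 = 0 := fun i j hij => by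
    simp [hU, inner_smul_left, inner_smul_right, x, inner_apply_rightSingularBasis, hij]
  have hUnorm (i) : ‖U (x i)‖ ≤ 1 := by
    rw [hU, norm_smul, norm_inv, RCLike.norm_ofReal, norm_apply_rightSingularBasis,
      abs_of_nonneg (T.singularValues_nonneg i)]
    exact inv_mul_le_one
  refine ⟨U, fun v => ?_, ?_⟩
  · refine (sq_le_sq₀ (norm_nonneg _) (norm_nonneg _)).1 ?_
    rw [norm_sq_apply_eq_sum_of_pairwise_inner_eq_zero x hUorth, ← x.sum_sq_norm_inner_right]
    refine sum_le_sum fun i _ => mul_le_of_le_one_left (sq_nonneg _) ?_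
    exact pow_le_one₀ (norm_nonneg _) (hUnorm i)
  · rw [LinearMap.trace_eq_sum_inner _ x, RCLike.ofReal_sum]
    refine sum_congr rfl fun i _ => ?_
    rw [LinearMap.comp_apply, LinearMap.adjoint_inner_right, hU, inner_smul_left,
      inner_apply_rightSingularBasis, if_pos rfl, map_inv₀, RCLike.conj_ofReal]
    rcases eq_or_ne (T.singularValues i) 0 with hi | hi
    · simp [hi]
    · field_simp [hi]

lemma sum_singularValues_add_le_sum_norm (S : E →ₗ[𝕜] F) {ι κ : Type*} [Fintype ι] [Fintype κ]
    (b : OrthonormalBasis ι 𝕜 E) (b' : OrthonormalBasis κ 𝕜 E) :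
    ∑ i : Fin (finrank 𝕜 E), (T + S).singularValues i ≤ ∑ i, ‖T (b i)‖ + ∑ i, ‖S (b' i)‖ := by
  obtain ⟨U, hU, htrace⟩ := exists_trace_adjoint_comp_eq_sum_singularValues (T + S)
  calc ∑ i : Fin (finrank 𝕜 E), (T + S).singularValues i
      = RCLike.re (LinearMap.trace 𝕜 E (LinearMap.adjoint U ∘ₗ (T + S))) := by
        rw [htrace, RCLike.ofReal_re]
    _ = RCLike.re (LinearMap.trace 𝕜 E (LinearMap.adjoint U ∘ₗ T)) +
          RCLike.re (LinearMap.trace 𝕜 E (LinearMap.adjoint U ∘ₗ S)) := by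
        rw [LinearMap.comp_add, map_add, map_add]
    _ ≤ ∑ i, ‖T (b i)‖ + ∑ i, ‖S (b' i)‖ :=
        add_le_add (re_trace_adjoint_comp_le_sum_norm T b hU)
          (re_trace_adjoint_comp_le_sum_norm S b' hU)

lemma exists_mul_finrank_range_add_sum_norm_sub_le {c : ℝ} (hc : 0 ≤ c) :
    ∃ R : E →ₗ[𝕜] F, c * finrank 𝕜 R.range + ∑ i, ‖(T - R) (rightSingularBasis T i)‖ ≤
      ∑ i : Fin (finrank 𝕜 E), min (T.singularValues i) c := by
  classical
  set x := rightSingularBasis T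
  set large : Finset (Fin (finrank 𝕜 E)) := {i | c < T.singularValues i}
  set R : E →ₗ[𝕜] F := x.toBasis.constr 𝕜 fun i => if i ∈ large then T (x i) else 0
  have hR (i) : R (x i) = if i ∈ large then T (x i) else 0 := by
    simp only [R, ← x.coe_toBasis, Basis.constr_basis]
  have hrange : R.range ≤ Submodule.span 𝕜 (large.image fun i => T (x i) : Finset F) := by
    rw [Basis.constr_range, Submodule.span_le]
    rintro _ ⟨i, rfl⟩
    dsimp only
    split_ifs with hi
    · exact Submodule.subset_span (mem_coe.2 (mem_image_of_mem _ hi))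
    · exact zero_mem _
  have hrank : finrank 𝕜 R.range ≤ #large :=
    (Submodule.finrank_mono hrange).trans
      ((finrank_span_finset_le_card _).trans card_image_le)
  refine ⟨R, ?_⟩
  calc c * finrank 𝕜 R.range + ∑ i, ‖(T - R) (x i)‖
      ≤ c * #large + ∑ i, ‖(T - R) (x i)‖ := by gcongr
    _ = ∑ i, ((if i ∈ large then c else 0) + ‖(T - R) (x i)‖) := by
        rw [sum_add_distrib, sum_ite_mem, univ_inter, sum_const, nsmul_eq_mul, mul_comm]
    _ = ∑ i : Fin (finrank 𝕜 E), min (T.singularValues i) c := by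
        refine sum_congr rfl fun i _ => ?_
        rw [LinearMap.sub_apply, hR]
        split_ifs with hi
        · simp [min_eq_right (mem_filter.1 hi).2.le]
        · have hle : T.singularValues i ≤ c := by simpa [large] using hi
          simp [x, norm_apply_rightSingularBasis, hle]

lemma sum_min_singularValues_add_le_mul_finrank_range_add_sum (T R : E →ₗ[𝕜] F) (c : ℝ) :
    ∑ i : Fin (finrank 𝕜 E), min ((T + R).singularValues i) c ≤
      c * finrank 𝕜 R.range + ∑ i : Fin (finrank 𝕜 E), T.singularValues i := by
  obtain ⟨m, hm⟩ := Nat.exists_eq_add_of_le R.finrank_range_le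
  rw [Fin.sum_univ_eq_sum_range (fun i => min ((T + R).singularValues i) c),
    Fin.sum_univ_eq_sum_range (fun i => T.singularValues i), hm, sum_range_add]
  refine add_le_add ?_ ?_
  · calc ∑ i ∈ range (finrank 𝕜 R.range), min ((T + R).singularValues i) c
        ≤ ∑ _i ∈ range (finrank 𝕜 R.range), c := sum_le_sum fun i _ => min_le_right _ _
      _ = c * finrank 𝕜 R.range := by rw [sum_const, card_range, nsmul_eq_mul, mul_comm]
  · calc ∑ i ∈ range m, min ((T + R).singularValues (finrank 𝕜 R.range + i)) c
        ≤ ∑ i ∈ range m, T.singularValues i := sum_le_sum fun i _ =>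
          (min_le_left _ _).trans (singularValues_finrank_range_add_le T R i)
      _ ≤ ∑ i ∈ range (finrank 𝕜 R.range + m), T.singularValues i :=
        sum_le_sum_of_subset_of_nonneg (range_mono (Nat.le_add_left _ _))
          fun i _ _ => T.singularValues_nonneg i

lemma sum_min_singularValues_add_le (S : E →ₗ[𝕜] F) {c : ℝ} (hc : 0 ≤ c) :
    ∑ i : Fin (finrank 𝕜 E), min ((T + S).singularValues i) c ≤
      ∑ i : Fin (finrank 𝕜 E), min (T.singularValues i) c +
        ∑ i : Fin (finrank 𝕜 E), min (S.singularValues i) c := by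
  obtain ⟨R, hR⟩ := exists_mul_finrank_range_add_sum_norm_sub_le T hc
  obtain ⟨Q, hQ⟩ := exists_mul_finrank_range_add_sum_norm_sub_le S hc
  have hsplit : T + S = (T - R) + (S - Q) + (R + Q) := by abel
  have hrank : (finrank 𝕜 (R + Q).range : ℝ) ≤ finrank 𝕜 R.range + finrank 𝕜 Q.range := by
    exact_mod_cast finrank_range_add_le R Q
  calc ∑ i : Fin (finrank 𝕜 E), min ((T + S).singularValues i) c
      ≤ c * finrank 𝕜 (R + Q).range +
          ∑ i : Fin (finrank 𝕜 E), ((T - R) + (S - Q)).singularValues i := by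
        rw [hsplit]
        exact sum_min_singularValues_add_le_mul_finrank_range_add_sum _ _ c
    _ ≤ c * (finrank 𝕜 R.range + finrank 𝕜 Q.range) +
          (∑ i, ‖(T - R) (rightSingularBasis T i)‖ + ∑ i, ‖(S - Q) (rightSingularBasis S i)‖) := by
        gcongr
        exact sum_singularValues_add_le_sum_norm _ _ _ _
    _ ≤ _ := by linarith

lemma sum_comp_singularValues_add_le (S : E →ₗ[𝕜] F) {f : ℝ → ℝ}
    (hf : ConcaveOn ℝ (Set.Ici 0) f) (hf_nonneg : ∀ t, 0 ≤ t → 0 ≤ f t) :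
    ∑ i : Fin (finrank 𝕜 E), f ((T + S).singularValues i) ≤
      ∑ i : Fin (finrank 𝕜 E), (f (T.singularValues i) + f (S.singularValues i)) := by
  have hmaj := sum_comp_le_sum_comp_of_sum_min_le
    (x := fun i : Fin (finrank 𝕜 E) => (T + S).singularValues i)
    (y := Sum.elim (fun i : Fin (finrank 𝕜 E) => T.singularValues i)
      fun i : Fin (finrank 𝕜 E) => S.singularValues i)
    (by simp) (fun i => LinearMap.singularValues_nonneg _ i)
    (by rintro (i | i) <;> exact LinearMap.singularValues_nonneg _ i)
    (fun c hc => by simpa using sum_min_singularValues_add_le T S hc)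
    hf (monotoneOn_Ici_of_concaveOn_of_forall_le hf hf_nonneg) (hf_nonneg 0 le_rfl)
  simpa [sum_add_distrib] using hmaj

lemma sum_range_comp_singularValues_add_le (S : E →ₗ[𝕜] F) {f : ℝ → ℝ}
    (hf : ConcaveOn ℝ (Set.Ici 0) f) (hf_nonneg : ∀ t, 0 ≤ t → 0 ≤ f t) {k : ℕ}
    (hk : k ≤ finrank 𝕜 E) :
    ∑ i ∈ range k, f ((T + S).singularValues i) ≤
      ∑ i ∈ range k, (f (T.singularValues i) + f (S.singularValues i)) := by
  have hmono := monotoneOn_Ici_of_concaveOn_of_forall_le hf hf_nonneg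
  set V := leadingSingularSpace (T + S) k
  have hV : finrank 𝕜 V = k := by rw [finrank_leadingSingularSpace, min_eq_left hk]
  have hrestrict (R : E →ₗ[𝕜] F) (i : ℕ) :
      f ((R.domRestrict V).singularValues i) ≤ f (R.singularValues i) :=
    hmono (LinearMap.singularValues_nonneg _ i) (R.singularValues_nonneg i)
      (singularValues_comp_le R (fun _ => le_rfl) i)
  have hsub := sum_comp_singularValues_add_le (T.domRestrict V) (S.domRestrict V) hf hf_nonneg
  rw [hV] at hsub
  simp only [Fin.sum_univ_eq_sum_range
    (fun i => f ((T.domRestrict V + S.domRestrict V).singularValues i)),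
    Fin.sum_univ_eq_sum_range (fun i =>
      f ((T.domRestrict V).singularValues i) + f ((S.domRestrict V).singularValues i))] at hsub
  calc ∑ i ∈ range k, f ((T + S).singularValues i)
      ≤ ∑ i ∈ range k, f ((T.domRestrict V + S.domRestrict V).singularValues i) :=
        sum_le_sum fun i hi => hmono ((T + S).singularValues_nonneg i)
          (LinearMap.singularValues_nonneg _ i)
          (singularValues_le_domRestrict_leadingSingularSpace (T + S) (mem_range.1 hi))
    _ ≤ ∑ i ∈ range k,
          (f ((T.domRestrict V).singularValues i) + f ((S.domRestrict V).singularValues i)) := hsub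
    _ ≤ ∑ i ∈ range k, (f (T.singularValues i) + f (S.singularValues i)) :=
        sum_le_sum fun i _ => add_le_add (hrestrict T i) (hrestrict S i)

end SingularVectors

section WeakMajorization

lemma sum_le_sum_range_card_of_antitone {M : Type*} [AddCommMonoid M] [PartialOrder M]
    [IsOrderedAddMonoid M] {x : ℕ → M} (hx : Antitone x) (s : Finset ℕ) :
    ∑ i ∈ s, x i ≤ ∑ i ∈ range #s, x i := by
  induction s using Finset.induction_on_max with
  | empty => simp
  | insert b s hlt ih =>
    have hb : b ∉ s := fun hmem => (hlt b hmem).false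
    have hcard : #s ≤ b := by
      simpa using card_le_card (show s ⊆ range b from fun i hi => mem_range.2 (hlt i hi))
    rw [sum_insert hb, card_insert_of_notMem hb, sum_range_succ, add_comm]
    exact add_le_add ih (hx hcard)

lemma IsWeaklyMajorizedBy.of_sum_range_le {n : ℕ} {x y : ℕ → ℝ} (hx : Antitone x)
    (hxy : ∀ k ≤ n, ∑ i ∈ range k, x i ≤ ∑ i ∈ range k, y i) :
    IsWeaklyMajorizedBy (fun i : Fin n => x i) fun i : Fin n => y i := by
  intro s
  have hs : #s ≤ n := card_finset_fin_le s
  refine ⟨univ.map (Fin.castLEEmb hs), by simp, ?_⟩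
  calc ∑ i ∈ s, x i = ∑ i ∈ s.map Fin.valEmbedding, x i := by simp
    _ ≤ ∑ i ∈ range #s, x i := by
        simpa using sum_le_sum_range_card_of_antitone hx (s.map Fin.valEmbedding)
    _ ≤ ∑ i ∈ range #s, y i := hxy _ hs
    _ = ∑ i ∈ univ.map (Fin.castLEEmb hs), y i := by
        simp [Fin.sum_univ_eq_sum_range y]

lemma IsWeaklyMajorizedBy.comp_equiv {m n : ℕ} {x y : Fin n → ℝ} (h : IsWeaklyMajorizedBy x y)
    (p : Fin m ≃ Fin n) : IsWeaklyMajorizedBy (fun i => x (p i)) fun i => y (p i) := by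
  intro s
  obtain ⟨t, ht, hst⟩ := h (s.map p.toEmbedding)
  exact ⟨t.map p.symm.toEmbedding, by simpa using ht, by simpa using hst⟩

end WeakMajorization

lemma exists_equiv_singVals_eq_singularValues (n : ℕ) :
    ∃ p : Fin n ≃ Fin (finrank ℂ (EuclideanSpace ℂ (Fin n))),
      ∀ (M : Matrix (Fin n) (Fin n) ℂ) (j : Fin n),
        singVals M j = (toEuclideanLin M).singularValues (p j) := by
  have hn : finrank ℂ (EuclideanSpace ℂ (Fin n)) = Fintype.card (Fin n) := finrank_euclideanSpace
  refine ⟨(Fintype.equivOfCardEq (Fintype.card_fin _)).symm.trans (finCongr hn.symm),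
    fun M j => ?_⟩
  have hgram : toEuclideanLin (Mᴴ * M) =
      LinearMap.adjoint (toEuclideanLin M) ∘ₗ toEuclideanLin M := by
    rw [← toEuclideanLin_conjTranspose_eq_adjoint]
    exact toLpLin_mul ..
  rw [Equiv.trans_apply, finCongr_apply, Fin.val_cast, LinearMap.singularValues_fin _ hn]
  simp only [singVals, IsHermitian.eigenvalues, IsHermitian.eigenvalues₀, hgram]

theorem uchiyama_subadditivity_general {𝕜 : Type*} [RCLike 𝕜]
    {E : Type*} [NormedAddCommGroup E] [InnerProductSpace 𝕜 E] [FiniteDimensional 𝕜 E]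
    {F : Type*} [NormedAddCommGroup F] [InnerProductSpace 𝕜 F] [FiniteDimensional 𝕜 F]
    {f : ℝ → ℝ} (hf : ConcaveOn ℝ (Set.Ici 0) f) (hf_nonneg : ∀ t, 0 ≤ t → 0 ≤ f t)
    (T S : E →ₗ[𝕜] F) :
    IsWeaklyMajorizedBy (fun j : Fin (finrank 𝕜 E) => f ((T + S).singularValues j))
      fun j => f (T.singularValues j) + f (S.singularValues j) :=
  .of_sum_range_le (x := fun j => f ((T + S).singularValues j))
    (y := fun j => f (T.singularValues j) + f (S.singularValues j))
    (fun i j hij => monotoneOn_Ici_of_concaveOn_of_forall_le hf hf_nonneg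
      (LinearMap.singularValues_nonneg _ j) (LinearMap.singularValues_nonneg _ i)
      (LinearMap.singularValues_antitone _ hij))
    fun _ hk => sum_range_comp_singularValues_add_le T S hf hf_nonneg hk

/-- Uchiyama's subadditivity theorem: for a concave `f : ℝ₊ → ℝ₊` with `f 0 = 0`,
`{f(σ_j(A+B))}_j ≺_w {f(σ_j(A)) + f(σ_j(B))}_j`. -/
theorem uchiyama_subadditivity {n : ℕ} (f : ℝ → ℝ)
    (hconc : ConcaveOn ℝ (Set.Ici (0 : ℝ)) f) (hf0 : f 0 = 0)
    (hfpos : ∀ t : ℝ, 0 ≤ t → 0 ≤ f t)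
    (A B : Matrix (Fin n) (Fin n) ℂ) :
    IsWeaklyMajorizedBy (fun j => f (singVals (A + B) j))
      (fun j => f (singVals A j) + f (singVals B j)) := by
  obtain ⟨p, hp⟩ := exists_equiv_singVals_eq_singularValues n
  simpa only [hp, map_add] using (uchiyama_subadditivity_general hconc hfpos
    (toEuclideanLin A) (toEuclideanLin B)).comp_equiv p
end

section
/- For strict contractions A, B in C_n (complex n×n matrices with operator norm < 1) and any positive integer k, the function (A,B) ↦ det(I - A*B)^{-k} is a positive definite kernel: for any A_1,…,A_m ∈ C_n, the m×m matrix [det(I - A_i* A_j)^{-k}] is Hermitian positive semidefinite. -/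
open Matrix
open scoped ComplexOrder

noncomputable def opNorm {n : ℕ} (A : Matrix (Fin n) (Fin n) ℂ) : ℝ :=
  ‖(Matrix.toEuclideanCLM (𝕜 := ℂ) A : EuclideanSpace ℂ (Fin n) →L[ℂ] EuclideanSpace ℂ (Fin n))‖

/-!
The kernel `det (1 - Aᴴ B)⁻¹` is an average of positive semidefinite kernels, by the Gaussian
integral `∫ exp (-(z* N z)) dz = πⁿ / det N` over `ℂⁿ` with `N = 1 - Aᴴ B`: the integrand
`exp (-‖z‖²) * exp ⟪A z, B z⟫` is, for each fixed `z`, a positive multiple of the entrywise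
exponential of a Gram matrix, hence positive semidefinite by the Schur product theorem. The Schur
product theorem also passes from the exponent `1` to `k`.

The matrix `N` is not Hermitian, but `ℜ N` is positive definite, because
`2 ℜ N = (1 - Aᴴ A) + (1 - Bᴴ B) + (A - B)ᴴ (A - B)`. So `ℜ N` and `ℑ N` can be diagonalized
by the same congruence, and this splits the integral into Gaussian integrals over `ℂ`.
-/

open MeasureTheory
open scoped ComplexStarModule

section PosSemidef

variable {ι 𝕜 : Type*} [RCLike 𝕜]

-- `Matrix.posSemidef_gram` requires a finite index type.
theorem posSemidef_gram_of_infinite {E : Type*} [SeminormedAddCommGroup E] [InnerProductSpace 𝕜 E]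
    (v : ι → E) : (gram 𝕜 v).PosSemidef := by
  refine ⟨isHermitian_gram 𝕜 v, fun x => ?_⟩
  have hx : (x.sum fun i xi => x.sum fun j xj => star xi * gram 𝕜 v i j * xj) =
      inner 𝕜 (x.sum fun i xi => xi • v i) (x.sum fun i xi => xi • v i) := by
    simp only [Finsupp.sum, sum_inner, inner_smul_left]
    simp only [inner_sum, inner_smul_right, Finset.mul_sum, gram_apply, RCLike.star_def]
    exact Finset.sum_congr rfl fun i _ => Finset.sum_congr rfl fun j _ => by ring
  rw [hx, inner_self_eq_norm_sq_to_K]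
  positivity

theorem isClosed_setOf_posSemidef : IsClosed {M : Matrix ι ι 𝕜 | M.PosSemidef} := by
  simp only [PosSemidef, Set.ofPred_and, Set.ofPred_forall]
  refine (isClosed_eq continuous_id.matrix_conjTranspose continuous_id).inter ?_
  refine isClosed_iInter fun x => isClosed_le continuous_const ?_
  simp only [Finsupp.sum]
  fun_prop

theorem posSemidef_map_pow {M : Matrix ι ι 𝕜} (hM : M.PosSemidef) (k : ℕ) :
    (M.map (· ^ k)).PosSemidef := by
  induction k with
  | zero =>
    convert posSemidef_gram_of_infinite (𝕜 := 𝕜) fun _ : ι => (1 : 𝕜) using 1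
    ext i j
    simp
  | succ k ih =>
    convert ih.hadamard hM using 1
    ext i j
    simp [pow_succ]

theorem posSemidef_map_exp {M : Matrix ι ι 𝕜} (hM : M.PosSemidef) :
    (M.map NormedSpace.exp).PosSemidef := by
  have hsum : HasSum (fun k : ℕ => (k.factorial : 𝕜)⁻¹ • M.map (· ^ k))
      (M.map NormedSpace.exp) := by
    refine Pi.hasSum.2 fun i => Pi.hasSum.2 fun j => ?_
    simpa [div_eq_inv_mul] using NormedSpace.expSeries_div_hasSum_exp (M i j)
  refine isClosed_setOf_posSemidef.mem_of_tendsto hsum <| .of_forall fun s => ?_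
  refine posSemidef_sum s fun k _ => (posSemidef_map_pow hM k).smul ?_
  positivity

theorem posSemidef_integral {α : Type*} [MeasurableSpace α] {μ : Measure α}
    {F : α → Matrix ι ι 𝕜} (hF : ∀ᵐ a ∂μ, (F a).PosSemidef)
    (hint : ∀ i j, Integrable (fun a => F a i j) μ) :
    (of fun i j => ∫ a, F a i j ∂μ).PosSemidef := by
  refine ⟨?_, fun x => ?_⟩
  · ext i j
    calc star (∫ a, F a j i ∂μ) = ∫ a, star (F a j i) ∂μ := integral_conj.symm
      _ = ∫ a, F a i j ∂μ :=
        integral_congr_ae (hF.mono fun a ha => ha.isHermitian.apply i j)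
  · have hint' (i j) : Integrable (fun a => star (x i) * F a i j * x j) μ :=
      ((hint i j).const_mul _).mul_const _
    have hx : (x.sum fun i xi => x.sum fun j xj => star xi * (∫ a, F a i j ∂μ) * xj) =
        ∫ a, (x.sum fun i xi => x.sum fun j xj => star xi * F a i j * xj) ∂μ := by
      simp only [Finsupp.sum]
      rw [integral_finsetSum _ fun i _ => integrable_finsetSum _ fun j _ => hint' i j]
      simp_rw [integral_finsetSum _ fun j _ => hint' _ j, integral_mul_const, integral_const_mul]
    simp only [of_apply]
    rw [hx]
    exact integral_nonneg_of_ae (hF.mono fun a ha => ha.2 x)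

end PosSemidef

section LinearChangeOfVariables

variable {n : Type*} [Fintype n] [DecidableEq n]

theorem map_mulVec_volume {S : Matrix n n ℂ} (hS : IsUnit S) :
    (volume : Measure (n → ℂ)).map (S *ᵥ ·) =
      ENNReal.ofReal (Complex.normSq S.det)⁻¹ • volume := by
  have hdet : LinearMap.det (S.toLin'.restrictScalars ℝ) = Complex.normSq S.det := by
    rw [LinearMap.det_restrictScalars, LinearMap.det_toLin', Algebra.norm_complex_apply]
  have hdet0 : LinearMap.det (S.toLin'.restrictScalars ℝ) ≠ 0 := by
    simpa [hdet] using (S.isUnit_iff_isUnit_det.1 hS).ne_zero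
  have hmap := Measure.map_linearMap_addHaar_eq_smul_addHaar (volume : Measure (n → ℂ)) hdet0
  rwa [hdet, abs_of_nonneg (inv_nonneg.2 (Complex.normSq_nonneg _))] at hmap

theorem measurableEmbedding_mulVec {S : Matrix n n ℂ} (hS : IsUnit S) :
    MeasurableEmbedding (S *ᵥ · : (n → ℂ) → n → ℂ) := by
  have : Continuous (S *ᵥ · : (n → ℂ) → n → ℂ) := by fun_prop
  exact this.measurableEmbedding (mulVec_injective_of_isUnit hS)

theorem integrable_comp_mulVec {E : Type*} [NormedAddCommGroup E] {S : Matrix n n ℂ}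
    (hS : IsUnit S) {f : (n → ℂ) → E} (hf : Integrable f) : Integrable fun z => f (S *ᵥ z) := by
  refine ((measurableEmbedding_mulVec hS).integrable_map_iff (g := f)).1 ?_
  rw [map_mulVec_volume hS]
  exact hf.smul_measure ENNReal.ofReal_ne_top

theorem integral_comp_mulVec {E : Type*} [NormedAddCommGroup E] [NormedSpace ℝ E]
    {S : Matrix n n ℂ} (hS : IsUnit S) (f : (n → ℂ) → E) :
    ∫ z, f (S *ᵥ z) = (Complex.normSq S.det)⁻¹ • ∫ z, f z := by
  rw [← (measurableEmbedding_mulVec hS).integral_map, map_mulVec_volume hS, integral_smul_measure,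
    ENNReal.toReal_ofReal (inv_nonneg.2 (Complex.normSq_nonneg _))]

end LinearChangeOfVariables

section SimultaneousDiagonalization

variable {n : Type*} [Fintype n] [DecidableEq n]

open scoped MatrixOrder Matrix.Norms.L2Operator in
theorem exists_isUnit_eq_conjTranspose_mul_self {𝕜 : Type*} [RCLike 𝕜] {P : Matrix n n 𝕜}
    (hP : P.PosDef) : ∃ R : Matrix n n 𝕜, IsUnit R ∧ P = Rᴴ * R :=
  CStarAlgebra.isStrictlyPositive_iff_eq_star_mul_self.1 hP.isStrictlyPositive

theorem exists_simultaneous_diagonalization {𝕜 : Type*} [RCLike 𝕜] {P H : Matrix n n 𝕜}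
    (hP : P.PosDef) (hH : H.IsHermitian) :
    ∃ (S : Matrix n n 𝕜) (l : n → ℝ), IsUnit S ∧ P = Sᴴ * S ∧
      H = Sᴴ * diagonal (fun i => (l i : 𝕜)) * S := by
  obtain ⟨R, hR, rfl⟩ := exists_isUnit_eq_conjTranspose_mul_self hP
  have hRinv : R⁻¹ * R = 1 := nonsing_inv_mul R (R.isUnit_iff_isUnit_det.1 hR)
  have hRinv' : Rᴴ * (R⁻¹)ᴴ = 1 := by rw [← conjTranspose_mul, hRinv, conjTranspose_one]
  have hK : ((R⁻¹)ᴴ * H * R⁻¹).IsHermitian := isHermitian_conjTranspose_mul_mul R⁻¹ hH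
  obtain ⟨U, l, hU, hspec⟩ : ∃ (U : Matrix n n 𝕜) (l : n → ℝ), U * Uᴴ = 1 ∧
      (R⁻¹)ᴴ * H * R⁻¹ = U * diagonal (fun i => (l i : 𝕜)) * Uᴴ :=
    ⟨hK.eigenvectorUnitary, hK.eigenvalues, Unitary.coe_mul_star_self hK.eigenvectorUnitary,
      hK.spectral_theorem⟩
  refine ⟨Uᴴ * R, l, ?_, ?_, ?_⟩
  · exact (IsUnit.of_mul_eq_one_right _ hU).mul hR
  · calc Rᴴ * R = Rᴴ * (U * Uᴴ) * R := by rw [hU, Matrix.mul_one]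
      _ = (Uᴴ * R)ᴴ * (Uᴴ * R) := by simp [Matrix.mul_assoc]
  · calc H = (Rᴴ * (R⁻¹)ᴴ) * H * (R⁻¹ * R) := by simp [hRinv, hRinv']
      _ = Rᴴ * ((R⁻¹)ᴴ * H * R⁻¹) * R := by simp only [Matrix.mul_assoc]
      _ = (Uᴴ * R)ᴴ * diagonal (fun i => (l i : 𝕜)) * (Uᴴ * R) := by
        rw [hspec]
        simp [Matrix.mul_assoc]

theorem exists_eq_conjTranspose_mul_diagonal_mul {N : Matrix n n ℂ}
    (hN : (ℜ N : Matrix n n ℂ).PosDef) :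
    ∃ (S : Matrix n n ℂ) (d : n → ℂ), IsUnit S ∧ (∀ i, 0 < (d i).re) ∧
      N = Sᴴ * diagonal d * S := by
  obtain ⟨S, l, hS, hre, him⟩ := exists_simultaneous_diagonalization hN (ℑ N).2
  refine ⟨S, fun i => 1 + Complex.I * l i, hS, fun i => by simp, ?_⟩
  have hd : diagonal (fun i => 1 + Complex.I * l i) =
      1 + Complex.I • diagonal fun i => (l i : ℂ) := by
    rw [← diagonal_one, ← diagonal_smul, diagonal_add]
    rfl
  calc N = ℜ N + Complex.I • (ℑ N : Matrix n n ℂ) := (realPart_add_I_smul_imaginaryPart N).symm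
    _ = Sᴴ * diagonal (fun i => 1 + Complex.I * l i) * S := by
      rw [hre, him, hd]
      simp [Matrix.mul_add, Matrix.add_mul]

theorem star_dotProduct_conjTranspose_mul_diagonal_mul_mulVec (S : Matrix n n ℂ) (d z : n → ℂ) :
    star z ⬝ᵥ (Sᴴ * diagonal d * S) *ᵥ z = ∑ i, d i * ‖(S *ᵥ z) i‖ ^ 2 := by
  rw [← mulVec_mulVec, ← mulVec_mulVec, dotProduct_mulVec, ← star_mulVec]
  refine Finset.sum_congr rfl fun i _ => ?_
  rw [mulVec_diagonal, Pi.star_apply, mul_left_comm, Complex.star_def, Complex.conj_mul']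

end SimultaneousDiagonalization

section GaussianIntegral

variable {n : Type*} [Fintype n]

theorem integrable_cexp_neg_sum_mul_norm_sq {d : n → ℂ} (hd : ∀ i, 0 < (d i).re) :
    Integrable fun z : n → ℂ => Complex.exp (-∑ i, d i * ‖z i‖ ^ 2) := by
  simp_rw [← Finset.sum_neg_distrib, Complex.exp_sum]
  refine Integrable.fintype_prod_dep (f := fun i (w : ℂ) => Complex.exp (-(d i * ‖w‖ ^ 2)))
    fun i => ?_
  simpa using GaussianFourier.integrable_cexp_neg_mul_sq_norm_add (hd i) 0 (0 : ℂ)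

theorem integral_cexp_neg_sum_mul_norm_sq {d : n → ℂ} (hd : ∀ i, 0 < (d i).re) :
    ∫ z : n → ℂ, Complex.exp (-∑ i, d i * ‖z i‖ ^ 2) = ∏ i, (Real.pi / d i : ℂ) := by
  simp_rw [← Finset.sum_neg_distrib, Complex.exp_sum]
  rw [integral_fintype_prod_volume_eq_prod fun i (w : ℂ) => Complex.exp (-(d i * ‖w‖ ^ 2))]
  refine Finset.prod_congr rfl fun i _ => ?_
  simpa using GaussianFourier.integral_cexp_neg_mul_sq_norm (V := ℂ) (hd i)

theorem integrable_cexp_neg_star_dotProduct_mulVec {N : Matrix n n ℂ}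
    (hN : (ℜ N : Matrix n n ℂ).PosDef) :
    Integrable fun z : n → ℂ => Complex.exp (-(star z ⬝ᵥ N *ᵥ z)) := by
  classical
  obtain ⟨S, d, hS, hd, rfl⟩ := exists_eq_conjTranspose_mul_diagonal_mul hN
  simp_rw [star_dotProduct_conjTranspose_mul_diagonal_mul_mulVec]
  exact integrable_comp_mulVec hS (integrable_cexp_neg_sum_mul_norm_sq hd)

theorem integral_cexp_neg_star_dotProduct_mulVec [DecidableEq n] {N : Matrix n n ℂ}
    (hN : (ℜ N : Matrix n n ℂ).PosDef) :
    ∫ z : n → ℂ, Complex.exp (-(star z ⬝ᵥ N *ᵥ z)) = Real.pi ^ Fintype.card n * N.det⁻¹ := by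
  obtain ⟨S, d, hS, hd, rfl⟩ := exists_eq_conjTranspose_mul_diagonal_mul hN
  simp_rw [star_dotProduct_conjTranspose_mul_diagonal_mul_mulVec]
  rw [integral_comp_mulVec hS fun z => Complex.exp (-∑ i, d i * ‖z i‖ ^ 2),
    integral_cexp_neg_sum_mul_norm_sq hd]
  simp only [Finset.prod_div_distrib, Finset.prod_const, Finset.card_univ, Complex.real_smul,
    Complex.ofReal_inv, Complex.normSq_eq_conj_mul_self, det_mul, det_conjTranspose, det_diagonal,
    Complex.star_def, _root_.mul_inv_rev]
  ring

end GaussianIntegral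

section Contraction

variable {n p 𝕜 : Type*} [Fintype p] [DecidableEq n] [RCLike 𝕜]

theorem posDef_realPart_one_sub_conjTranspose_mul [Finite n] {A B : Matrix p n ℂ}
    (hA : (1 - Aᴴ * A).PosDef) (hB : (1 - Bᴴ * B).PosDef) :
    (ℜ (1 - Aᴴ * B) : Matrix n n ℂ).PosDef := by
  have hre : (ℜ (1 - Aᴴ * B) : Matrix n n ℂ) =
      (2⁻¹ : ℝ) • ((1 - Aᴴ * A) + (1 - Bᴴ * B) + (A - B)ᴴ * (A - B)) := by
    rw [realPart_apply_coe, star_eq_conjTranspose]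
    simp only [conjTranspose_sub, conjTranspose_mul, conjTranspose_one,
      conjTranspose_conjTranspose, Matrix.mul_sub, Matrix.sub_mul]
    congr 1
    abel
  have := Fintype.ofFinite n
  rw [hre]
  exact ((hA.add hB).add_posSemidef (posSemidef_conjTranspose_mul_self _)).smul (by positivity)

variable [Fintype n]

theorem star_dotProduct_one_sub_conjTranspose_mul_mulVec (A B : Matrix p n 𝕜) (z : n → 𝕜) :
    star z ⬝ᵥ (1 - Aᴴ * B) *ᵥ z =
      ‖WithLp.toLp 2 z‖ ^ 2 - inner 𝕜 (WithLp.toLp 2 (A *ᵥ z)) (WithLp.toLp 2 (B *ᵥ z)) := by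
  rw [sub_mulVec, one_mulVec, dotProduct_sub, ← mulVec_mulVec, dotProduct_mulVec, ← star_mulVec,
    ← inner_self_eq_norm_sq_to_K, EuclideanSpace.inner_toLp_toLp, EuclideanSpace.inner_toLp_toLp,
    dotProduct_comm, dotProduct_comm (B *ᵥ z)]

open scoped Matrix.Norms.L2Operator in
theorem posDef_one_sub_conjTranspose_mul_self {A : Matrix p n 𝕜} (hA : ‖A‖ < 1) :
    (1 - Aᴴ * A).PosDef := by
  refine .of_dotProduct_mulVec_pos
    (isHermitian_one.sub (isHermitian_conjTranspose_mul_self A)) fun x hx => ?_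
  have hx0 : 0 < ‖WithLp.toLp 2 x‖ := norm_pos_iff.2 ((WithLp.toLp_eq_zero 2).not.2 hx)
  have hAx : ‖WithLp.toLp 2 (A *ᵥ x)‖ < ‖WithLp.toLp 2 x‖ :=
    (A.l2_opNorm_mulVec (WithLp.toLp 2 x)).trans_lt (mul_lt_of_lt_one_left hx0 hA)
  have hform : star x ⬝ᵥ (1 - Aᴴ * A) *ᵥ x =
      ((‖WithLp.toLp 2 x‖ ^ 2 - ‖WithLp.toLp 2 (A *ᵥ x)‖ ^ 2 : ℝ) : 𝕜) := by
    rw [star_dotProduct_one_sub_conjTranspose_mul_mulVec, inner_self_eq_norm_sq_to_K]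
    push_cast
    rfl
  rw [hform]
  exact_mod_cast sub_pos.2 (pow_lt_pow_left₀ hAx (norm_nonneg _) two_ne_zero)

variable {ι : Type*}

theorem posSemidef_cexp_neg_star_dotProduct_mulVec (A : ι → Matrix p n ℂ) (z : n → ℂ) :
    (of fun i j => Complex.exp (-(star z ⬝ᵥ (1 - (A i)ᴴ * A j) *ᵥ z))).PosSemidef := by
  have hexp := posSemidef_map_exp
    (posSemidef_gram_of_infinite (𝕜 := ℂ) fun i => WithLp.toLp 2 (A i *ᵥ z))
  have hfactor : (of fun i j => Complex.exp (-(star z ⬝ᵥ (1 - (A i)ᴴ * A j) *ᵥ z))) =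
      Real.exp (-‖WithLp.toLp 2 z‖ ^ 2) •
        (gram ℂ fun i => WithLp.toLp 2 (A i *ᵥ z)).map NormedSpace.exp := by
    ext i j
    rw [of_apply, star_dotProduct_one_sub_conjTranspose_mul_mulVec, Matrix.smul_apply, map_apply,
      gram_apply, ← Complex.exp_eq_exp_ℂ, Complex.real_smul, Complex.ofReal_exp, ← Complex.exp_add,
      neg_sub, sub_eq_neg_add]
    push_cast
    rfl
  rw [hfactor]
  exact hexp.smul (Real.exp_pos _).le

theorem posSemidef_inv_det_one_sub_conjTranspose_mul {A : ι → Matrix p n ℂ}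
    (hA : ∀ i, (1 - (A i)ᴴ * A i).PosDef) :
    (of fun i j => (1 - (A i)ᴴ * A j).det⁻¹).PosSemidef := by
  have hN i j := posDef_realPart_one_sub_conjTranspose_mul (hA i) (hA j)
  have hint := posSemidef_integral (.of_forall (posSemidef_cexp_neg_star_dotProduct_mulVec A))
    fun i j => integrable_cexp_neg_star_dotProduct_mulVec (hN i j)
  have hpi : 0 ≤ (Real.pi ^ Fintype.card n)⁻¹ := by positivity
  have hdet : (of fun i j => (1 - (A i)ᴴ * A j).det⁻¹) = (Real.pi ^ Fintype.card n)⁻¹ •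
      of fun i j => ∫ z : n → ℂ, Complex.exp (-(star z ⬝ᵥ (1 - (A i)ᴴ * A j) *ᵥ z)) := by
    ext i j
    simp [integral_cexp_neg_star_dotProduct_mulVec (hN i j), Real.pi_ne_zero]
  rw [hdet]
  exact hint.smul hpi

open scoped Matrix.Norms.L2Operator in
theorem det_inv_pow_posdef_kernel_general (k : ℕ) (A : ι → Matrix p n ℂ)
    (hA : ∀ i, ‖A i‖ < 1) :
    (of fun i j => (det (1 - (A i)ᴴ * A j))⁻¹ ^ k).PosSemidef :=
  posSemidef_map_pow (posSemidef_inv_det_one_sub_conjTranspose_mul fun i =>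
    posDef_one_sub_conjTranspose_mul_self (hA i)) k

end Contraction

/-- For every positive integer `k`, `(A,B) ↦ det(I - AᴴB)⁻ᵏ` is a positive definite
kernel on strict contractions: every Gram-type matrix built from it is positive
semidefinite. -/
theorem det_inv_pow_posdef_kernel {n : ℕ} (k : ℕ) (hk : 0 < k)
    (m : ℕ) (A : Fin m → Matrix (Fin n) (Fin n) ℂ) (hA : ∀ i, opNorm (A i) < 1) :
    (Matrix.of fun i j : Fin m =>
      (Matrix.det (1 - (A i)ᴴ * A j))⁻¹ ^ k).PosSemidef :=
  det_inv_pow_posdef_kernel_general k A hA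
end
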